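/- For every open bounded convex set Ω ⊂ ℝ^N and every open ball B ⊂ ℝ^N one has the strict inequality μ_p(Ω) < λ_p(B) · (diam(B)/diam(Ω))^p. -/

import Mathlib

open MeasureTheory Metric Set Real

noncomputable section

/-- The Rayleigh quotient `(∫_Ω |∇v|^p) / (∫_Ω |v|^q)^(p/q)`, where the gradient is
understood as the (a.e. defined) Fréchet derivative. -/
def rayleighQuot {N : ℕ} (p q : ℝ) (Ω : Set (EuclideanSpace ℝ (Fin N)))
    (v : EuclideanSpace ℝ (Fin N) → ℝ) : ℝ :=
  (∫ x in Ω, ‖fderiv ℝ v x‖ ^ p) / (∫ x in Ω, |v x| ^ q) ^ (p / q)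

/-- The first (generalized) Dirichlet eigenvalue `λ_{p,q}(Ω)`: infimum of the Rayleigh
quotient over nontrivial smooth functions compactly supported in `Ω`. -/
def lambdaPQ {N : ℕ} (p q : ℝ) (Ω : Set (EuclideanSpace ℝ (Fin N))) : ℝ :=
  sInf { R : ℝ | ∃ v : EuclideanSpace ℝ (Fin N) → ℝ,
    ContDiff ℝ (⊤ : ℕ∞) v ∧ HasCompactSupport v ∧ tsupport v ⊆ Ω ∧
    (∃ x ∈ Ω, v x ≠ 0) ∧ R = rayleighQuot p q Ω v }

/-- The first nontrivial (generalized) Neumann eigenvalue `μ_{p,q}(Ω)`: infimum of the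
Rayleigh quotient over nontrivial Lipschitz functions on the closure of `Ω` satisfying
the constraint `∫_Ω |v|^(q-2) v = 0`. -/
def muPQ {N : ℕ} (p q : ℝ) (Ω : Set (EuclideanSpace ℝ (Fin N))) : ℝ :=
  sInf { R : ℝ | ∃ v : EuclideanSpace ℝ (Fin N) → ℝ, ∃ K : NNReal,
    LipschitzOnWith K v (closure Ω) ∧ (∃ x ∈ Ω, v x ≠ 0) ∧
    (∫ x in Ω, |v x| ^ (q - 2) * v x) = 0 ∧ R = rayleighQuot p q Ω v }

/-- `q` is below the critical Sobolev exponent `p* = Np/(N-p)` (with `p* = ∞` if `p ≥ N`). -/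
def ltCritical (N : ℕ) (p q : ℝ) : Prop := p < N → q < N * p / (N - p)

end


lemma polar_lintegral {N : ℕ} (hN : 2 ≤ N) (g : EuclideanSpace ℝ (Fin N) → ENNReal)
    (hg : Measurable g) :
    ∫⁻ x, g x = ∫⁻ θ, (∫⁻ t in Ioi (0:ℝ), g (t • (θ : EuclideanSpace ℝ (Fin N))) *
      ENNReal.ofReal (t ^ (N - 1)))
      ∂((volume : Measure (EuclideanSpace ℝ (Fin N))).toSphere) := by
  let E := EuclideanSpace ℝ (Fin N)
  have hdim : Module.finrank ℝ E = N := by simp [E]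
  have : Nontrivial E := Module.nontrivial_of_finrank_pos (R := ℝ) (by omega)
  calc ∫⁻ x, g x = ∫⁻ x : ({(0)}ᶜ : Set E), g x ∂((volume : Measure E).comap (↑)) := by
        rw [lintegral_subtype_comap (measurableSet_singleton _).compl, restrict_compl_singleton]
    _ = ∫⁻ y, g (y.2.1 • y.1.1) ∂((volume : Measure E).toSphere.prod (.volumeIoiPow (N - 1))) := by
        have h := (volume : Measure E).measurePreserving_homeomorphUnitSphereProd
        rw [hdim] at h
        rw [← h.lintegral_comp_emb (Homeomorph.measurableEmbedding _)]
        refine lintegral_congr fun x => ?_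
        congr 1
        have := congrArg Subtype.val ((homeomorphUnitSphereProd E).symm_apply_apply x)
        rw [homeomorphUnitSphereProd_symm_apply_coe] at this
        exact this.symm
    _ = ∫⁻ θ, (∫⁻ t : Ioi (0:ℝ), g (t.1 • θ.1) ∂(Measure.volumeIoiPow (N-1)))
          ∂((volume : Measure E).toSphere) := by
        rw [lintegral_prod]
        refine (hg.comp ?_).aemeasurable
        have : Continuous (fun y : sphere (0:E) 1 × Ioi (0:ℝ) => y.2.1 • y.1.1) := by fun_prop
        exact this.measurable
    _ = _ := by
        refine lintegral_congr fun θ => ?_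
        rw [Measure.volumeIoiPow, lintegral_withDensity_eq_lintegral_mul]
        · rw [← lintegral_subtype_comap measurableSet_Ioi]
          refine lintegral_congr fun t => ?_
          simp [mul_comm]
        · fun_prop
        · refine hg.comp ?_
          have : Continuous (fun y : Ioi (0:ℝ) => y.1 • θ.1) := by fun_prop
          exact this.measurable

lemma polar_set {N : ℕ} (hN : 2 ≤ N) (Ω : Set (EuclideanSpace ℝ (Fin N))) (hΩ : MeasurableSet Ω)
    (x₀ : EuclideanSpace ℝ (Fin N)) (g : EuclideanSpace ℝ (Fin N) → ENNReal)
    (hg : Measurable g) :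
    ∫⁻ x in Ω, g x = ∫⁻ θ, (∫⁻ t in {t : ℝ | 0 < t ∧ x₀ + t • θ.1 ∈ Ω},
      g (x₀ + t • θ.1) * ENNReal.ofReal (t ^ (N - 1)))
      ∂((volume : Measure (EuclideanSpace ℝ (Fin N))).toSphere) := by
  rw [← lintegral_indicator hΩ, ← lintegral_add_left_eq_self (μ := volume) _ x₀,
    polar_lintegral hN]
  · refine lintegral_congr fun θ => ?_
    have hm : Measurable (fun t : ℝ => x₀ + t • θ.1) := by fun_prop
    have hs : {t : ℝ | 0 < t ∧ x₀ + t • θ.1 ∈ Ω} = Ioi 0 ∩ (fun t : ℝ => x₀ + t • θ.1) ⁻¹' Ω := rfl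
    rw [hs, inter_comm, ← Measure.restrict_restrict (hm hΩ), ← lintegral_indicator (hm hΩ)]
    refine lintegral_congr fun t => ?_
    by_cases h : x₀ + t • θ.1 ∈ Ω
    · rw [indicator_of_mem h, indicator_of_mem (by exact h)]
    · rw [indicator_of_notMem h, indicator_of_notMem (by exact h), zero_mul]
  · exact (hg.indicator hΩ).comp (measurable_const_add x₀)

/-- the one-dimensional truncation lemma -/
lemma oneD (p Q r : ℝ) (hp : 1 < p) (hr : 0 < r) (n : ℕ) (φ f : ℝ → ℝ)
    (hφ : Continuous φ) (hφ0 : ∀ t, 0 ≤ φ t) (hφr : ∀ t, r ≤ t → φ t = 0)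
    (hf : ∀ t, f t = ∫ s in t..r, φ s) (hfc : Continuous f) (hfnn : ∀ t, 0 ≤ f t)
    (hf0 : 0 < f 0) (hQ : 0 ≤ Q)
    (hNQ : ∫ t in (0:ℝ)..r, φ t ^ p * t ^ n ≤ Q * ∫ t in (0:ℝ)..r, f t ^ p * t ^ n) :
    ∃ ρ₀, 0 ≤ ρ₀ ∧ 0 < f ρ₀ ∧ ∀ ρ, 0 ≤ ρ →
      ∫ t in (0:ℝ)..ρ, (Ioi ρ₀).indicator φ t ^ p * t ^ n ≤
        Q * ∫ t in (0:ℝ)..ρ, f (max t ρ₀) ^ p * t ^ n := by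
  have hp0 : 0 ≤ p := by linarith
  have c1 : Continuous fun t => φ t ^ p * t ^ n :=
    (hφ.rpow_const (fun _ => Or.inr hp0)).mul (continuous_pow n)
  have c2 : Continuous fun t => f t ^ p * t ^ n :=
    (hfc.rpow_const (fun _ => Or.inr hp0)).mul (continuous_pow n)
  have c3 : ∀ a, Continuous fun t => f (max t a) ^ p * t ^ n := fun a =>
    ((hfc.comp (continuous_id.max continuous_const)).rpow_const (fun _ => Or.inr hp0)).mul
      (continuous_pow n)
  have hfr : ∀ t, r ≤ t → f t = 0 := by
    intro t ht
    rw [hf, intervalIntegral.integral_symm,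
      intervalIntegral.integral_congr (g := fun _ => (0:ℝ))]
    · simp
    · intro s hs
      rw [uIcc_of_le ht] at hs
      exact hφr s hs.1
  set G : ℝ → ℝ := fun ρ => ∫ t in (0:ℝ)..ρ, (φ t ^ p * t ^ n - Q * (f t ^ p * t ^ n)) with hG
  have c4 : Continuous fun t => Q * (f t ^ p * t ^ n) := continuous_const.mul c2
  have cg : Continuous fun t => φ t ^ p * t ^ n - Q * (f t ^ p * t ^ n) :=
    c1.sub (continuous_const.mul c2)
  have hGc : Continuous G := intervalIntegral.continuous_primitive
    (fun a b => cg.intervalIntegrable a b) 0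
  have hGr : G r ≤ 0 := by
    simp only [hG]
    rw [intervalIntegral.integral_sub (c1.intervalIntegrable _ _)
      (c4.intervalIntegrable _ _), intervalIntegral.integral_const_mul]
    linarith
  have hGd : ∀ a b, G b - G a = ∫ t in a..b, (φ t ^ p * t ^ n - Q * (f t ^ p * t ^ n)) := by
    intro a b
    exact intervalIntegral.integral_interval_sub_left (cg.intervalIntegrable _ _)
      (cg.intervalIntegrable _ _)
  have hG0 : G 0 = 0 := by simp [hG]
  have hGconst : ∀ a b, (∀ t, a ≤ t → t ≤ b → φ t = 0 ∧ f t = 0) → a ≤ b → G b = G a := by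
    intro a b h hab
    have := hGd a b
    rw [intervalIntegral.integral_congr (g := fun _ => (0:ℝ))] at this
    · simp at this; linarith
    · intro s hs
      rw [uIcc_of_le hab] at hs
      obtain ⟨h1, h2⟩ := h s hs.1 hs.2
      simp [h1, h2, Real.zero_rpow (by linarith : p ≠ 0)]
  have key : ∃ ρ₀, 0 ≤ ρ₀ ∧ 0 < f ρ₀ ∧ ∀ ρ, ρ₀ ≤ ρ → G ρ ≤ G ρ₀ := by
    obtain ⟨a, ha, hmax⟩ := isCompact_Icc.exists_isMaxOn (nonempty_Icc.2 hr.le)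
      (hGc.continuousOn (s := Icc 0 r))
    have hmax' : ∀ ρ, 0 ≤ ρ → G ρ ≤ G a := by
      intro ρ hρ
      rcases le_total ρ r with h | h
      · exact hmax ⟨hρ, h⟩
      · rw [hGconst r ρ (fun t ht _ => ⟨hφr t ht, hfr t ht⟩) h]
        exact hmax ⟨hr.le, le_rfl⟩
    by_cases hpos : 0 < G a
    · refine ⟨a, ha.1, ?_, fun ρ h => hmax' ρ (ha.1.trans h)⟩
      by_contra hcon
      have hfa : f a = 0 := le_antisymm (not_lt.1 hcon) (hfnn a)
      have : G r = G a := by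
        have hz : ∀ t ∈ Icc a r, φ t = 0 := by
          have h1 : ∫ s in a..r, φ s = 0 := by rw [← hf]; exact hfa
          rcases ha.2.eq_or_lt with h | h
          · intro t ht; exact hφr t (h ▸ ht.1)
          intro t ht
          by_contra hne
          have hlt : 0 < ∫ s in a..r, φ s :=
            intervalIntegral.integral_pos h hφ.continuousOn (fun s _ => hφ0 s)
              ⟨t, ht, lt_of_le_of_ne (hφ0 t) (Ne.symm hne)⟩
          linarith
        refine hGconst a r (fun t h1 h2 => ⟨hz t ⟨h1, h2⟩, ?_⟩) ha.2
        rw [hf, intervalIntegral.integral_congr (g := fun _ => (0:ℝ))]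
        · simp
        · intro s hs
          rw [uIcc_of_le h2] at hs
          exact hz s ⟨h1.trans hs.1, hs.2⟩
      linarith
    · refine ⟨0, le_rfl, hf0, fun ρ h => ?_⟩
      rw [hG0]; linarith [hmax' ρ h]
  obtain ⟨ρ₀, h0, hfp, hle⟩ := key
  refine ⟨ρ₀, h0, hfp, fun ρ hρ => ?_⟩
  have hi : (fun t => (Ioi ρ₀).indicator φ t ^ p * t ^ n) =
      (Ioi ρ₀).indicator (fun t => φ t ^ p * t ^ n) := by
    ext t
    by_cases h : t ∈ Ioi ρ₀
    · simp [indicator_of_mem h]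
    · simp [indicator_of_notMem h, Real.zero_rpow (by linarith : p ≠ 0)]
  have hDnn : ∀ a b, 0 ≤ a → a ≤ b → 0 ≤ ∫ t in a..b, f (max t ρ₀) ^ p * t ^ n := by
    intro a b ha hab
    refine intervalIntegral.integral_nonneg hab fun t ht => ?_
    exact mul_nonneg (Real.rpow_nonneg (hfnn _) _) (pow_nonneg (ha.trans ht.1) _)
  have e1 : ∀ b, b ≤ ρ₀ → 0 ≤ b → ∫ t in (0:ℝ)..b, (Ioi ρ₀).indicator (fun t => φ t ^ p * t ^ n) t = 0 := by
    intro b hb hb0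
    rw [intervalIntegral.integral_congr (g := fun _ => (0:ℝ))]
    · simp
    · intro s hs
      rw [uIcc_of_le hb0] at hs
      exact indicator_of_notMem (by simpa using hs.2.trans hb) _
  rw [hi]
  rcases le_total ρ ρ₀ with h | h
  · rw [e1 ρ h hρ]
    exact mul_nonneg hQ (hDnn 0 ρ le_rfl hρ)
  · have ii : ∀ a b, IntervalIntegrable ((Ioi ρ₀).indicator (fun t => φ t ^ p * t ^ n)) volume a b := by
      intro a b
      have := c1.intervalIntegrable (μ := volume) a b
      exact ⟨this.1.indicator measurableSet_Ioi, this.2.indicator measurableSet_Ioi⟩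
    rw [← intervalIntegral.integral_add_adjacent_intervals (ii 0 ρ₀) (ii ρ₀ ρ), e1 ρ₀ le_rfl h0,
      ← intervalIntegral.integral_add_adjacent_intervals ((c3 ρ₀).intervalIntegrable 0 ρ₀)
        ((c3 ρ₀).intervalIntegrable ρ₀ ρ), zero_add]
    have e2 : ∫ t in ρ₀..ρ, (Ioi ρ₀).indicator (fun t => φ t ^ p * t ^ n) t =
        ∫ t in ρ₀..ρ, φ t ^ p * t ^ n := by
      refine intervalIntegral.integral_congr_ae (Filter.Eventually.of_forall fun t ht => ?_)
      rw [uIoc_of_le h] at ht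
      exact indicator_of_mem (by exact ht.1) _
    have e3 : ∫ t in ρ₀..ρ, f (max t ρ₀) ^ p * t ^ n = ∫ t in ρ₀..ρ, f t ^ p * t ^ n := by
      refine intervalIntegral.integral_congr fun t ht => ?_
      rw [uIcc_of_le h] at ht
      simp [max_eq_left ht.1]
    rw [e2, e3]
    have h3 := hGd ρ₀ ρ
    rw [intervalIntegral.integral_sub (c1.intervalIntegrable _ _)
      (c4.intervalIntegrable _ _), intervalIntegral.integral_const_mul] at h3
    have h4 := hle ρ h
    have h5 := mul_nonneg hQ (hDnn 0 ρ₀ le_rfl h0)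
    rw [mul_add]
    linarith

lemma prim_props (r : ℝ) (φ f : ℝ → ℝ)
    (hφ : Continuous φ) (hφ0 : ∀ t, 0 ≤ φ t) {r' : ℝ} (hr' : r' ≤ r)
    (hφr : ∀ t, r' ≤ t → φ t = 0)
    (hf : ∀ t, f t = ∫ s in t..r, φ s) :
    (∀ t, HasDerivAt f (-φ t) t) ∧ Antitone f ∧ (∀ t, r' ≤ t → f t = 0) ∧ (∀ t, 0 ≤ f t) := by
  have hd : ∀ t, HasDerivAt f (-φ t) t := by
    intro t
    have hfe : f = fun t => ∫ s in t..r, φ s := funext hf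
    rw [hfe]
    exact intervalIntegral.integral_hasDerivAt_left (hφ.intervalIntegrable _ _)
      (hφ.stronglyMeasurableAtFilter _ _) hφ.continuousAt
  have ha : Antitone f := antitone_of_deriv_nonpos (fun t => (hd t).differentiableAt)
    (fun t => by rw [(hd t).deriv]; linarith [hφ0 t])
  have hz : ∀ t, r' ≤ t → f t = 0 := by
    intro t ht
    rw [hf, intervalIntegral.integral_congr (g := fun _ => (0:ℝ))]
    · simp
    · intro s hs
      exact hφr s ((le_inf ht hr').trans hs.1)
  refine ⟨hd, ha, hz, fun t => ?_⟩
  rcases le_total r' t with h | h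
  · rw [hz t h]
  · rw [← hz r' le_rfl]; exact ha h

lemma poincare1D (p r : ℝ) (hp : 1 < p) (hr : 0 < r) (n : ℕ) (φ f : ℝ → ℝ)
    (hφ : Continuous φ) (hφ0 : ∀ t, 0 ≤ φ t)
    (hf : ∀ t, f t = ∫ s in t..r, φ s) :
    ∫ t in (0:ℝ)..r, f t ^ p * t ^ n ≤ r ^ p * ∫ t in (0:ℝ)..r, φ t ^ p * t ^ n := by
  have hp0 : 0 ≤ p := by linarith
  have cp : Continuous fun t => φ t ^ p := hφ.rpow_const (fun _ => Or.inr hp0)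
  have c1 : Continuous fun t => φ t ^ p * t ^ n := cp.mul (continuous_pow n)
  set A := ∫ t in (0:ℝ)..r, φ t ^ p * t ^ n with hA
  have hpt : ∀ t ∈ Ioo 0 r, f t ^ p * t ^ n ≤ r ^ (p - 1) * A := by
    rintro t ⟨ht0, htr⟩
    have hL : 0 < r - t := by linarith
    have hj : (⨍ s in Ioc t r, φ s) ^ p ≤ ⨍ s in Ioc t r, φ s ^ p := by
      refine (convexOn_rpow hp.le).map_set_average_le (f := φ) (g := fun x : ℝ => x ^ p) ?_ isClosed_Ici ?_ ?_ ?_ ?_ ?_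
      · exact (continuous_id.rpow_const (fun _ => Or.inr hp0)).continuousOn
      · simp [htr]
      · simp
      · exact Filter.Eventually.of_forall fun s => hφ0 s
      · exact (hφ.intervalIntegrable t r).1
      · exact (cp.intervalIntegrable t r).1
    rw [setAverage_eq, setAverage_eq, ← intervalIntegral.integral_of_le htr.le,
      ← intervalIntegral.integral_of_le htr.le, ← hf] at hj
    simp only [measureReal_def, Real.volume_Ioc, ENNReal.toReal_ofReal hL.le, smul_eq_mul] at hj
    have hfn : 0 ≤ f t := by
      rw [hf]; exact intervalIntegral.integral_nonneg htr.le (fun s _ => hφ0 s)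
    rw [Real.mul_rpow (by positivity) hfn, Real.inv_rpow hL.le] at hj
    have hLp : 0 < (r - t) ^ p := Real.rpow_pos_of_pos hL p
    have h1 : f t ^ p ≤ (r - t) ^ (p - 1) * ∫ s in t..r, φ s ^ p := by
      rw [Real.rpow_sub_one hL.ne']
      rw [inv_mul_le_iff₀ hLp] at hj
      calc _ ≤ _ := hj
        _ = _ := by field_simp
    have h2 : (∫ s in t..r, φ s ^ p) * t ^ n ≤ A := by
      rw [← intervalIntegral.integral_mul_const]
      calc _ ≤ ∫ s in t..r, φ s ^ p * s ^ n := by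
            refine intervalIntegral.integral_mono_on htr.le ((cp.mul continuous_const).intervalIntegrable _ _)
              (c1.intervalIntegrable _ _) fun s hs => ?_
            exact mul_le_mul_of_nonneg_left (pow_le_pow_left₀ ht0.le hs.1 n) (Real.rpow_nonneg (hφ0 s) p)
        _ ≤ A := by
            rw [hA, ← intervalIntegral.integral_add_adjacent_intervals
              (c1.intervalIntegrable 0 t) (c1.intervalIntegrable t r)]
            have := intervalIntegral.integral_nonneg (μ := volume) ht0.le (f := fun t => φ t ^ p * t ^ n)
              (fun s hs => mul_nonneg (Real.rpow_nonneg (hφ0 s) p) (pow_nonneg hs.1 n))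
            linarith
    have h3 : (r - t) ^ (p - 1) ≤ r ^ (p - 1) :=
      Real.rpow_le_rpow hL.le (by linarith) (by linarith)
    have hI : 0 ≤ (∫ s in t..r, φ s ^ p) * t ^ n := mul_nonneg
      (intervalIntegral.integral_nonneg htr.le (fun s _ => Real.rpow_nonneg (hφ0 s) p)) (pow_nonneg ht0.le n)
    calc f t ^ p * t ^ n ≤ ((r - t) ^ (p - 1) * ∫ s in t..r, φ s ^ p) * t ^ n :=
          mul_le_mul_of_nonneg_right h1 (pow_nonneg ht0.le n)
      _ = (r - t) ^ (p - 1) * ((∫ s in t..r, φ s ^ p) * t ^ n) := by ring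
      _ ≤ r ^ (p - 1) * A := mul_le_mul h3 h2 hI (Real.rpow_nonneg hr.le _)
  have hfc : Continuous f := by
    have hfe : f = fun t => ∫ s in t..r, φ s := funext hf
    rw [hfe]
    have : (fun t => ∫ s in t..r, φ s) = fun t => -∫ s in r..t, φ s := by
      ext t; rw [intervalIntegral.integral_symm]
    rw [this]
    exact (intervalIntegral.continuous_primitive (fun a b => hφ.intervalIntegrable a b) r).neg
  have c2 : Continuous fun t => f t ^ p * t ^ n :=
    (hfc.rpow_const (fun _ => Or.inr hp0)).mul (continuous_pow n)
  calc ∫ t in (0:ℝ)..r, f t ^ p * t ^ n ≤ ∫ t in (0:ℝ)..r, r ^ (p - 1) * A :=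
        intervalIntegral.integral_mono_on_of_le_Ioo hr.le (c2.intervalIntegrable _ _)
          (by simp) hpt
    _ = r ^ p * A := by
        rw [intervalIntegral.integral_const, smul_eq_mul, sub_zero, ← mul_assoc,
          Real.rpow_sub_one hr.ne']
        field_simp

lemma lint_Ioo (g : ℝ → ℝ) (a : ℝ) (ha : 0 ≤ a) (hg : IntervalIntegrable g volume 0 a)
    (h0 : ∀ t, 0 ≤ t → 0 ≤ g t) :
    ∫⁻ t in Ioo 0 a, ENNReal.ofReal (g t) = ENNReal.ofReal (∫ t in (0:ℝ)..a, g t) := by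
  rw [Measure.restrict_congr_set Ioo_ae_eq_Ioc, intervalIntegral.integral_of_le ha,
    ofReal_integral_eq_lintegral_ofReal hg.1]
  filter_upwards [ae_restrict_mem measurableSet_Ioc] with t ht
  exact h0 t ht.1.le

lemma exists_ray {N : ℕ} (hN : 2 ≤ N) (p r Q : ℝ) (hp : 1 < p) (hr : 0 < r)
    (c : EuclideanSpace ℝ (Fin N)) (v : EuclideanSpace ℝ (Fin N) → ℝ)
    (hv : ContDiff ℝ (⊤ : ℕ∞) v) (hvc : HasCompactSupport v) (hvs : tsupport v ⊆ ball c r)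
    (hne : ∃ x ∈ ball c r, v x ≠ 0) (hQ : rayleighQuot p p (ball c r) v < Q) :
    ∃ (φ : ℝ → ℝ) (r' K : ℝ), Continuous φ ∧ (∀ t, 0 ≤ φ t) ∧ (∀ t, φ t ≤ K) ∧ r' < r ∧
      (∀ t, r' ≤ t → φ t = 0) ∧
      ∫ t in (0:ℝ)..r, φ t ^ p * t ^ (N-1) < Q * ∫ t in (0:ℝ)..r, (∫ s in t..r, φ s) ^ p * t ^ (N-1) := by
  have hp0 : 0 ≤ p := by linarith
  have hd : Continuous (fderiv ℝ v) := hv.continuous_fderiv (by simp)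
  have cA : Continuous fun x => ‖fderiv ℝ v x‖ ^ p := hd.norm.rpow_const (fun _ => Or.inr hp0)
  have cB : Continuous fun x => |v x| ^ p := hv.continuous.abs.rpow_const (fun _ => Or.inr hp0)
  have iA : IntegrableOn (fun x => ‖fderiv ℝ v x‖ ^ p) (ball c r) :=
    (cA.continuousOn.integrableOn_compact (isCompact_closedBall c r)).mono_set ball_subset_closedBall
  have iB : IntegrableOn (fun x => |v x| ^ p) (ball c r) :=
    (cB.continuousOn.integrableOn_compact (isCompact_closedBall c r)).mono_set ball_subset_closedBall
  have hB : 0 < ∫ x in ball c r, |v x| ^ p := by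
    rw [setIntegral_pos_iff_support_of_nonneg_ae
      (Filter.Eventually.of_forall fun x => Real.rpow_nonneg (abs_nonneg _) _) iB]
    obtain ⟨x, hx, hvx⟩ := hne
    refine ((cB.isOpen_support).inter isOpen_ball).measure_pos _ ⟨x, ?_, hx⟩
    exact (Real.rpow_pos_of_pos (abs_pos.2 hvx) p).ne'
  have hQ0 : 0 ≤ Q := by
    refine le_trans ?_ hQ.le
    unfold rayleighQuot
    refine div_nonneg (integral_nonneg fun x => Real.rpow_nonneg (norm_nonneg _) _)
      (Real.rpow_nonneg hB.le _)
  have hAB : ∫ x in ball c r, ‖fderiv ℝ v x‖ ^ p < Q * ∫ x in ball c r, |v x| ^ p := by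
    unfold rayleighQuot at hQ
    rwa [div_self (by linarith), Real.rpow_one, div_lt_iff₀ hB] at hQ
  have hABl : ∫⁻ x in ball c r, ENNReal.ofReal (‖fderiv ℝ v x‖ ^ p) <
      ENNReal.ofReal Q * ∫⁻ x in ball c r, ENNReal.ofReal (|v x| ^ p) := by
    rw [← ofReal_integral_eq_lintegral_ofReal iA
        (Filter.Eventually.of_forall fun x => Real.rpow_nonneg (norm_nonneg _) _),
      ← ofReal_integral_eq_lintegral_ofReal iB
        (Filter.Eventually.of_forall fun x => Real.rpow_nonneg (abs_nonneg _) _),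
      ← ENNReal.ofReal_mul hQ0]
    refine (ENNReal.ofReal_lt_ofReal_iff_of_nonneg ?_).2 hAB
    exact integral_nonneg fun x => Real.rpow_nonneg (norm_nonneg _) _
  rw [polar_set hN _ measurableSet_ball c _ cA.measurable.ennreal_ofReal,
    polar_set hN _ measurableSet_ball c _ cB.measurable.ennreal_ofReal,
    ← lintegral_const_mul' _ _ ENNReal.ofReal_ne_top] at hABl
  obtain ⟨θ, hθ⟩ : ∃ θ : sphere (0:EuclideanSpace ℝ (Fin N)) 1,
      ∫⁻ t in {t : ℝ | 0 < t ∧ c + t • θ.1 ∈ ball c r},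
        ENNReal.ofReal (‖fderiv ℝ v (c + t • θ.1)‖ ^ p) * ENNReal.ofReal (t ^ (N - 1)) <
      ENNReal.ofReal Q * ∫⁻ t in {t : ℝ | 0 < t ∧ c + t • θ.1 ∈ ball c r},
        ENNReal.ofReal (|v (c + t • θ.1)| ^ p) * ENNReal.ofReal (t ^ (N - 1)) := by
    by_contra hcon
    push Not at hcon
    exact absurd hABl (not_lt.2 (lintegral_mono hcon))
  have hθn : ‖θ.1‖ = 1 := by simp
  have hset : {t : ℝ | 0 < t ∧ c + t • θ.1 ∈ ball c r} = Ioo 0 r := by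
    ext t
    simp only [mem_ofPred_eq, mem_Ioo, mem_ball, dist_self_add_left, norm_smul, hθn, mul_one,
      Real.norm_eq_abs]
    constructor
    · rintro ⟨h1, h2⟩; exact ⟨h1, (le_abs_self t).trans_lt h2⟩
    · rintro ⟨h1, h2⟩; exact ⟨h1, by rwa [abs_of_pos h1]⟩
  rw [hset] at hθ
  obtain ⟨r', hr', hsub⟩ := exists_lt_subset_ball (isClosed_tsupport v) hvs
  obtain ⟨K, hK⟩ := (hvc.fderiv (𝕜 := ℝ)).exists_bound_of_continuous hd
  have hnot : ∀ t, max r' 0 ≤ t → c + t • θ.1 ∉ tsupport v := by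
    intro t ht hmem
    have h1 := hsub hmem
    simp only [mem_ball, dist_self_add_left, norm_smul, hθn, mul_one, Real.norm_eq_abs] at h1
    have := le_abs_self t
    have := le_max_left r' 0
    linarith
  set φ : ℝ → ℝ := fun t => |fderiv ℝ v (c + t • θ.1) θ.1| with hφ
  have cd : Continuous fun t : ℝ => fderiv ℝ v (c + t • θ.1) θ.1 := by
    have : Continuous fun t : ℝ => fderiv ℝ v (c + t • θ.1) := hd.comp (by fun_prop)
    exact this.clm_apply continuous_const
  have cφ : Continuous φ := cd.abs
  have hφle : ∀ t, φ t ≤ ‖fderiv ℝ v (c + t • θ.1)‖ := by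
    intro t
    have := (fderiv ℝ v (c + t • θ.1)).le_opNorm θ.1
    rwa [hθn, mul_one, Real.norm_eq_abs] at this
  have hφ0 : ∀ t, 0 ≤ φ t := fun t => abs_nonneg _
  have hφz : ∀ t, max r' 0 ≤ t → φ t = 0 := by
    intro t ht
    simp only [hφ]
    rw [fderiv_of_notMem_tsupport (𝕜 := ℝ) (hnot t ht)]
    simp
  refine ⟨φ, max r' 0, K, cφ, hφ0, fun t => (hφle t).trans (hK _), max_lt hr' hr, hφz, ?_⟩
  obtain ⟨hfd, hfa, hfz, hfn⟩ := prim_props r φ (fun t => ∫ s in t..r, φ s) cφ hφ0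
    (max_lt hr' hr).le hφz (fun t => rfl)
  have hfc : Continuous fun t => ∫ s in t..r, φ s :=
    continuous_iff_continuousAt.2 fun t => (hfd t).continuousAt
  have hder : ∀ t : ℝ, HasDerivAt (fun t : ℝ => v (c + t • θ.1)) (fderiv ℝ v (c + t • θ.1) θ.1) t := by
    intro t
    have h1 : HasFDerivAt v (fderiv ℝ v (c + t • θ.1)) (c + t • θ.1) :=
      (hv.differentiable (by simp) _).hasFDerivAt
    have h2 : HasDerivAt (fun t : ℝ => c + t • θ.1) θ.1 t := by
      simpa using ((hasDerivAt_id t).smul_const θ.1).const_add c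
    exact h1.comp_hasDerivAt t h2
  have hvf : ∀ t, 0 ≤ t → t ≤ r → |v (c + t • θ.1)| ≤ ∫ s in t..r, φ s := by
    intro t ht htr
    have h1 := intervalIntegral.integral_eq_sub_of_hasDerivAt (a := t) (b := r)
      (fun s _ => hder s) (cd.intervalIntegrable _ _)
    have h2 : v (c + r • θ.1) = 0 := image_eq_zero_of_notMem_tsupport (hnot r (max_lt hr' hr).le)
    rw [h2, zero_sub] at h1
    rw [← abs_neg, ← h1]
    exact intervalIntegral.abs_integral_le_integral_abs htr
  have c1 : Continuous fun t => φ t ^ p * t ^ (N-1) :=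
    (cφ.rpow_const (fun _ => Or.inr hp0)).mul (continuous_pow _)
  have c2 : Continuous fun t => (∫ s in t..r, φ s) ^ p * t ^ (N-1) :=
    (hfc.rpow_const (fun _ => Or.inr hp0)).mul (continuous_pow _)
  have n1 : ∀ t, 0 ≤ t → 0 ≤ φ t ^ p * t ^ (N-1) := fun t ht =>
    mul_nonneg (Real.rpow_nonneg (hφ0 t) p) (pow_nonneg ht _)
  have n2 : ∀ t, 0 ≤ t → 0 ≤ (∫ s in t..r, φ s) ^ p * t ^ (N-1) := fun t ht =>
    mul_nonneg (Real.rpow_nonneg (hfn t) p) (pow_nonneg ht _)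
  have L1 : ENNReal.ofReal (∫ t in (0:ℝ)..r, φ t ^ p * t ^ (N-1)) ≤ ∫⁻ t in Ioo 0 r,
        ENNReal.ofReal (‖fderiv ℝ v (c + t • θ.1)‖ ^ p) * ENNReal.ofReal (t ^ (N - 1)) := by
    rw [← lint_Ioo _ r hr.le (c1.intervalIntegrable _ _) n1]
    refine setLIntegral_mono' measurableSet_Ioo fun t ht => ?_
    rw [ENNReal.ofReal_mul (Real.rpow_nonneg (hφ0 t) p)]
    gcongr
    exact hφle t
  have L2 : ∫⁻ t in Ioo 0 r,
        ENNReal.ofReal (|v (c + t • θ.1)| ^ p) * ENNReal.ofReal (t ^ (N - 1)) ≤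
        ENNReal.ofReal (∫ t in (0:ℝ)..r, (∫ s in t..r, φ s) ^ p * t ^ (N-1)) := by
    rw [← lint_Ioo _ r hr.le (c2.intervalIntegrable _ _) n2]
    refine setLIntegral_mono' measurableSet_Ioo fun t ht => ?_
    rw [ENNReal.ofReal_mul (Real.rpow_nonneg (hfn t) p)]
    gcongr
    exact hvf t ht.1.le ht.2.le
  have L3 := (L1.trans_lt hθ).trans_le (mul_le_mul_right L2 (ENNReal.ofReal Q))
  rw [← ENNReal.ofReal_mul hQ0] at L3
  exact (ENNReal.ofReal_lt_ofReal_iff_of_nonneg (intervalIntegral.integral_nonneg hr.le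
    (fun t ht => n1 t ht.1))).1 L3

noncomputable def Aop {N : ℕ} (e : EuclideanSpace ℝ (Fin N)) :
    EuclideanSpace ℝ (Fin N) →L[ℝ] EuclideanSpace ℝ (Fin N) :=
  (1/2:ℝ) • (ContinuousLinearMap.id ℝ _ + (innerSL ℝ e).smulRight e)

lemma Aop_apply {N : ℕ} (e x : EuclideanSpace ℝ (Fin N)) :
    Aop e x = (1/2:ℝ) • (x + (inner ℝ e x : ℝ) • e) := by
  simp [Aop]

lemma Aop_symm {N : ℕ} (e x y : EuclideanSpace ℝ (Fin N)) :
    (inner ℝ (Aop e x) (Aop e y) : ℝ) = inner ℝ (Aop e (Aop e x)) y := by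
  have h : ∀ a b : EuclideanSpace ℝ (Fin N), (inner ℝ a (Aop e b) : ℝ) = inner ℝ (Aop e a) b := by
    intro a b
    simp only [Aop_apply, inner_smul_left, inner_smul_right, inner_add_left, inner_add_right]
    rw [real_inner_comm a e]
    simp
    ring
  exact h _ _

lemma Aop_norm_sq {N : ℕ} (e x : EuclideanSpace ℝ (Fin N)) (he : ‖e‖ = 1) :
    ‖Aop e x‖ ^ 2 = (‖x‖ ^ 2 + 3 * (inner ℝ e x : ℝ) ^ 2) / 4 := by
  rw [← real_inner_self_eq_norm_sq, ← real_inner_self_eq_norm_sq]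
  simp only [Aop_apply, inner_smul_left, inner_smul_right, inner_add_left, inner_add_right]
  rw [real_inner_self_eq_norm_sq e, he, real_inner_comm e x]
  simp
  ring

lemma inner_sq_le {N : ℕ} (e x : EuclideanSpace ℝ (Fin N)) (he : ‖e‖ = 1) :
    (inner ℝ e x : ℝ) ^ 2 ≤ ‖x‖ ^ 2 := by
  have := abs_real_inner_le_norm e x
  rw [he, one_mul] at this
  exact sq_le_sq.2 (by rwa [abs_norm])

lemma le_of_sqs {a b : ℝ} (h : a ^ 2 ≤ b ^ 2) (hb : 0 ≤ b) : a ≤ b :=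
  (le_abs_self a).trans (abs_le_of_sq_le_sq h hb)

lemma Aop_le {N : ℕ} (e x : EuclideanSpace ℝ (Fin N)) (he : ‖e‖ = 1) : ‖Aop e x‖ ≤ ‖x‖ := by
  refine le_of_sqs ?_ (norm_nonneg _)
  rw [Aop_norm_sq e x he]; linarith [inner_sq_le e x he]

lemma Aop_ge {N : ℕ} (e x : EuclideanSpace ℝ (Fin N)) (he : ‖e‖ = 1) : ‖x‖ / 2 ≤ ‖Aop e x‖ := by
  refine le_of_sqs ?_ (norm_nonneg _)
  rw [Aop_norm_sq e x he, div_pow]; nlinarith [sq_nonneg (inner ℝ e x : ℝ)]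

lemma Aop_inner {N : ℕ} (e x : EuclideanSpace ℝ (Fin N)) (he : ‖e‖ = 1) :
    |(inner ℝ e x : ℝ)| ≤ ‖Aop e x‖ := by
  refine abs_le_of_sq_le_sq ?_ (norm_nonneg _)
  rw [Aop_norm_sq e x he]; linarith [inner_sq_le e x he]

lemma Aop_lt {N : ℕ} (e x : EuclideanSpace ℝ (Fin N)) (he : ‖e‖ = 1)
    (h : (inner ℝ e x : ℝ) ^ 2 < ‖x‖ ^ 2) : ‖Aop e x‖ < ‖x‖ := by
  refine lt_of_pow_lt_pow_left₀ 2 (norm_nonneg _) ?_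
  rw [Aop_norm_sq e x he]; linarith

lemma Aop_inner_apply {N : ℕ} (e x : EuclideanSpace ℝ (Fin N)) (he : ‖e‖ = 1) :
    (inner ℝ e (Aop e x) : ℝ) = inner ℝ e x := by
  simp only [Aop_apply, inner_smul_right, inner_add_right, real_inner_self_eq_norm_sq, he]
  ring

lemma Aop_lt' {N : ℕ} (e x : EuclideanSpace ℝ (Fin N)) (he : ‖e‖ = 1)
    (h : (inner ℝ e x : ℝ) ^ 2 < ‖x‖ ^ 2) : ‖Aop e (Aop e x)‖ < ‖Aop e x‖ := by
  refine Aop_lt e _ he ?_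
  rw [Aop_inner_apply e x he, Aop_norm_sq e x he]; linarith

lemma grad_H {N : ℕ} (e x₀ x : EuclideanSpace ℝ (Fin N)) (he : ‖e‖ = 1) (k : ℝ) (hk : 0 < k)
    (hx : x ≠ x₀) :
    ∃ L : EuclideanSpace ℝ (Fin N) →L[ℝ] ℝ,
      HasFDerivAt (fun x => k * ‖Aop e (x - x₀)‖) L x ∧
      ‖L‖ ≤ k * (‖Aop e (Aop e (x - x₀))‖ / ‖Aop e (x - x₀)‖) := by
  have hpos : 0 < ‖Aop e (x - x₀)‖ := by
    have := Aop_ge e (x - x₀) he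
    have : 0 < ‖x - x₀‖ := norm_pos_iff.2 (sub_ne_zero.2 hx)
    linarith
  have h1 : HasFDerivAt (fun x => Aop e (x - x₀)) (Aop e) x := by
    have := (Aop e).hasFDerivAt.comp x ((hasFDerivAt_id x).sub_const x₀)
    rw [ContinuousLinearMap.comp_id] at this
    exact this
  have h2 := h1.norm_sq.sqrt (by positivity)
  have h3 := h2.const_mul k
  simp only [Real.sqrt_sq (norm_nonneg _)] at h3
  refine ⟨_, h3, ?_⟩
  refine ContinuousLinearMap.opNorm_le_bound _ (by positivity) fun z => ?_
  have h5 := abs_real_inner_le_norm (Aop e (Aop e (x - x₀))) z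
  rw [← Aop_symm] at h5
  simp only [smul_apply, ContinuousLinearMap.comp_apply, innerSL_apply_apply,
    smul_eq_mul, Real.norm_eq_abs, nsmul_eq_mul]
  rw [abs_mul, abs_mul, abs_of_pos hk, abs_of_pos (by positivity : 0 < 1 / (2 * ‖Aop e (x - x₀)‖))]
  have h6 : |(2:ℕ) • (inner ℝ (Aop e (x - x₀)) (Aop e z) : ℝ)| =
      2 * |(inner ℝ (Aop e (x - x₀)) (Aop e z) : ℝ)| := by
    rw [nsmul_eq_mul, abs_mul]; norm_num
  calc _ = k * (1 / (2 * ‖Aop e (x - x₀)‖) * (2 * |(inner ℝ (Aop e (x - x₀)) (Aop e z) : ℝ)|)) := by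
        rw [← h6, nsmul_eq_mul]
    _ = k / ‖Aop e (x - x₀)‖ * |(inner ℝ (Aop e (x - x₀)) (Aop e z) : ℝ)| := by
        field_simp
    _ ≤ k / ‖Aop e (x - x₀)‖ * (‖Aop e (Aop e (x - x₀))‖ * ‖z‖) := by gcongr
    _ = _ := by ring

lemma grad_u {N : ℕ} (e x₀ x : EuclideanSpace ℝ (Fin N)) (he : ‖e‖ = 1) (k : ℝ) (hk : 0 < k)
    (hx : x ≠ x₀) (φ f : ℝ → ℝ) (hφ0 : ∀ t, 0 ≤ φ t) (hf : ∀ t, HasDerivAt f (-φ t) t) (ρ₀ : ℝ)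
    (hρ : k * ‖Aop e (x - x₀)‖ ≠ ρ₀) :
    ‖fderiv ℝ (fun x => f (max (k * ‖Aop e (x - x₀)‖) ρ₀)) x‖ ≤
      (Ioi ρ₀).indicator φ (k * ‖Aop e (x - x₀)‖) *
        (k * (‖Aop e (Aop e (x - x₀))‖ / ‖Aop e (x - x₀)‖)) := by
  have hc : Continuous fun x => k * ‖Aop e (x - x₀)‖ := by fun_prop
  rcases lt_or_gt_of_ne hρ with h | h
  · have he : (fun x => f (max (k * ‖Aop e (x - x₀)‖) ρ₀)) =ᶠ[nhds x] fun _ => f ρ₀ := by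
      filter_upwards [(isOpen_lt hc continuous_const).mem_nhds h] with y hy
      rw [max_eq_right (le_of_lt hy)]
    rw [he.fderiv_eq, indicator_of_notMem (by simpa using h.le)]
    simp
  · obtain ⟨L, hL, hLn⟩ := grad_H e x₀ x he k hk hx
    have he : (fun x => f (max (k * ‖Aop e (x - x₀)‖) ρ₀)) =ᶠ[nhds x]
        fun x => f (k * ‖Aop e (x - x₀)‖) := by
      filter_upwards [(isOpen_lt continuous_const hc).mem_nhds h] with y hy
      rw [max_eq_left (le_of_lt hy)]
    have h1 := (hf (k * ‖Aop e (x - x₀)‖)).comp_hasFDerivAt x hL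
    have h2 : fderiv ℝ (fun x => f (k * ‖Aop e (x - x₀)‖)) x = _ := h1.fderiv
    rw [he.fderiv_eq, indicator_of_mem (by exact h), h2, norm_smul, norm_neg, Real.norm_eq_abs,
      abs_of_nonneg (hφ0 _)]
    exact mul_le_mul_of_nonneg_left hLn (hφ0 _)

lemma scaled_ineq (p Q m : ℝ) (hm : 0 < m) (n : ℕ) (ψ F : ℝ → ℝ)
    (h : ∀ ρ, 0 ≤ ρ → ∫ t in (0:ℝ)..ρ, ψ t ^ p * t ^ n ≤ Q * ∫ t in (0:ℝ)..ρ, F t ^ p * t ^ n)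
    (ρ : ℝ) (hρ : 0 ≤ ρ) :
    ∫ t in (0:ℝ)..ρ, ψ (m * t) ^ p * t ^ n ≤ Q * ∫ t in (0:ℝ)..ρ, F (m * t) ^ p * t ^ n := by
  have key : ∀ g : ℝ → ℝ, ∫ t in (0:ℝ)..ρ, g (m * t) ^ p * t ^ n =
      (m⁻¹ * (m ^ n)⁻¹) * ∫ t in (0:ℝ)..(m * ρ), g t ^ p * t ^ n := by
    intro g
    have h1 := intervalIntegral.integral_comp_mul_left (a := 0) (b := ρ)
      (fun s => g s ^ p * s ^ n) hm.ne'
    rw [mul_zero, smul_eq_mul] at h1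
    rw [mul_comm (m⁻¹), mul_assoc, ← h1, ← intervalIntegral.integral_const_mul]
    congr 1; ext t
    rw [mul_pow]; field_simp
  rw [key, key]
  have h2 := h (m * ρ) (by positivity)
  calc _ ≤ (m⁻¹ * (m ^ n)⁻¹) * (Q * ∫ t in (0:ℝ)..(m * ρ), F t ^ p * t ^ n) := by gcongr
    _ = _ := by ring

lemma doubling (p k m s : ℝ) (hp : 0 ≤ p) (hk : 0 < k) (hm : 2 ≤ m) (hs : 0 < s) (n : ℕ) (F : ℝ → ℝ)
    (hF : Antitone F) (hFc : Continuous F) (hF0 : ∀ t, 0 ≤ F t) :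
    ∫ t in (0:ℝ)..(m * s), F (k / 2 * t) ^ p * t ^ n ≤
      m ^ (n+1) * ∫ t in (0:ℝ)..s, F (k * t) ^ p * t ^ n := by
  have hm0 : 0 < m := by linarith
  have h1 := intervalIntegral.integral_comp_mul_left (a := 0) (b := s)
      (fun t => F (k / 2 * t) ^ p * t ^ n) hm0.ne'
  rw [mul_zero, smul_eq_mul] at h1
  have h2 : ∫ t in (0:ℝ)..(m * s), F (k / 2 * t) ^ p * t ^ n =
      m * ∫ t in (0:ℝ)..s, F (k / 2 * (m * t)) ^ p * (m * t) ^ n := by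
    rw [h1]; field_simp
  rw [h2, pow_succ', mul_assoc, ← intervalIntegral.integral_const_mul (m ^ n)]
  refine mul_le_mul_of_nonneg_left ?_ hm0.le
  have cc : ∀ g : ℝ → ℝ, Continuous g → Continuous fun t => F (g t) ^ p := fun g hg =>
    (hFc.comp hg).rpow_const (fun _ => Or.inr hp)
  refine intervalIntegral.integral_mono_on hs.le ?_ ?_ fun t ht => ?_
  · exact ((cc (fun t => k / 2 * (m * t)) (by fun_prop)).mul (by fun_prop)).intervalIntegrable _ _
  · exact (continuous_const.mul ((cc (fun t => k * t) (by fun_prop)).mul (by fun_prop))).intervalIntegrable _ _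
  · rw [mul_pow, mul_left_comm]
    have : k * t ≤ k / 2 * (m * t) := by nlinarith [mul_nonneg hk.le ht.1]
    have h3 := Real.rpow_le_rpow (hF0 _) (hF this) hp
    have := pow_nonneg ht.1 n
    gcongr

lemma ray_mem {N : ℕ} {Ω : Set (EuclideanSpace ℝ (Fin N))} (hΩo : IsOpen Ω)
    (hΩc : Convex ℝ Ω) {x₀ : EuclideanSpace ℝ (Fin N)} (hx₀ : x₀ ∈ closure Ω)
    (y : EuclideanSpace ℝ (Fin N)) {s t : ℝ} (hs : 0 < s) (hst : s ≤ t) (ht : x₀ + t • y ∈ Ω) :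
    x₀ + s • y ∈ Ω := by
  have ht0 : 0 < t := hs.trans_le hst
  have h := hΩc.combo_closure_interior_mem_interior hx₀ (hΩo.interior_eq.symm ▸ ht)
    (a := 1 - s / t) (b := s / t) (by rw [sub_nonneg, div_le_one ht0]; exact hst)
    (by positivity) (by ring)
  rw [hΩo.interior_eq] at h
  convert h using 1
  rw [smul_add, ← add_assoc, ← add_smul, smul_smul]
  congr 1
  · simp
  · congr 1; field_simp

lemma ray_set {N : ℕ} {Ω : Set (EuclideanSpace ℝ (Fin N))} (hΩo : IsOpen Ω)
    (hΩc : Convex ℝ Ω) {x₀ : EuclideanSpace ℝ (Fin N)} (hx₀ : x₀ ∈ closure Ω) (d : ℝ)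
    (hd : ∀ x ∈ Ω, ‖x - x₀‖ ≤ d)
    (θ : sphere (0 : EuclideanSpace ℝ (Fin N)) 1) :
    ∃ ρ, 0 ≤ ρ ∧ {t : ℝ | 0 < t ∧ x₀ + t • θ.1 ∈ Ω} =ᵐ[volume] Ioo 0 ρ := by
  set T := {t : ℝ | 0 < t ∧ x₀ + t • θ.1 ∈ Ω} with hT
  have hθn : ‖θ.1‖ = 1 := by simp
  have hbd : BddAbove T := by
    refine ⟨d, fun t ht => ?_⟩
    have := hd _ ht.2
    rw [add_sub_cancel_left, norm_smul, hθn, mul_one, Real.norm_eq_abs] at this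
    exact (le_abs_self t).trans this
  refine ⟨sSup T, Real.sSup_nonneg fun t ht => ht.1.le, ?_⟩
  have h1 : T ⊆ Ioc 0 (sSup T) := fun t ht => ⟨ht.1, le_csSup hbd ht⟩
  have h2 : Ioo 0 (sSup T) ⊆ T := by
    rintro t ⟨ht0, ht⟩
    have hne : T.Nonempty := by
      by_contra hcon
      rw [not_nonempty_iff_eq_empty] at hcon
      rw [hcon, Real.sSup_empty] at ht
      linarith
    obtain ⟨s, hs, hts⟩ := exists_lt_of_lt_csSup hne ht
    exact ⟨ht0, ray_mem hΩo hΩc hx₀ θ.1 ht0 hts.le hs.2⟩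
  exact (h1.eventuallyLE.trans Ioo_ae_eq_Ioc.symm.le).antisymm h2.eventuallyLE

lemma exists_off_axis {N : ℕ} (hN : 2 ≤ N) {Ω : Set (EuclideanSpace ℝ (Fin N))} (hΩo : IsOpen Ω)
    (hΩne : Ω.Nonempty) (x₀ e : EuclideanSpace ℝ (Fin N)) (he : ‖e‖ = 1) :
    ∃ z ∈ Ω, (inner ℝ e (z - x₀) : ℝ) ^ 2 < ‖z - x₀‖ ^ 2 := by
  have hker : LinearMap.ker (innerSL ℝ e).toLinearMap ≠ ⊥ := by
    refine LinearMap.ker_ne_bot_of_finrank_lt ?_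
    simp; omega
  obtain ⟨w, hw, hw0⟩ := Submodule.exists_mem_ne_zero_of_ne_bot hker
  have hew : (inner ℝ e w : ℝ) = 0 := by simpa using hw
  obtain ⟨z, hz⟩ := hΩne
  have hc : Continuous fun t : ℝ => z + t • w := by fun_prop
  have hn : {t : ℝ | z + t • w ∈ Ω} ∈ nhds (0:ℝ) :=
    (hΩo.preimage hc).mem_nhds (by simpa using hz)
  obtain ⟨ε, hε, hball⟩ := Metric.mem_nhds_iff.1 hn
  have m1 : z + (ε/2) • w ∈ Ω := hball (by simp [abs_of_pos hε]; linarith)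
  have m2 : z + (-(ε/2)) • w ∈ Ω := hball (by simp [abs_of_pos hε]; linarith)
  have hwp : 0 < ‖w‖ ^ 2 := by have := norm_pos_iff.2 hw0; positivity
  have key : ∀ t : ℝ, ‖z + t • w - x₀‖ ^ 2 = ‖z - x₀‖ ^ 2 + 2 * t * inner ℝ (z - x₀) w + t ^ 2 * ‖w‖ ^ 2 := by
    intro t
    have : z + t • w - x₀ = (z - x₀) + t • w := by abel
    rw [this, norm_add_sq_real, inner_smul_right, norm_smul, mul_pow, Real.norm_eq_abs, sq_abs]
    ring
  have key2 : ∀ t : ℝ, (inner ℝ e (z + t • w - x₀) : ℝ) = inner ℝ e (z - x₀) := by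
    intro t
    have : z + t • w - x₀ = (z - x₀) + t • w := by abel
    rw [this, inner_add_right, inner_smul_right, hew]; ring
  have hle := inner_sq_le e (z - x₀) he
  have hp : 0 < (ε/2) ^ 2 * ‖w‖ ^ 2 := by positivity
  rcases le_total 0 (inner ℝ (z - x₀) w : ℝ) with h | h
  · refine ⟨_, m1, ?_⟩
    rw [key, key2]
    nlinarith [mul_nonneg hε.le h]
  · refine ⟨_, m2, ?_⟩
    rw [key, key2]
    nlinarith [mul_nonneg hε.le (neg_nonneg.2 h)]

lemma point_est {N : ℕ} (hN : 2 ≤ N) (p : ℝ) (hp : 1 < p)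
    {Ω : Set (EuclideanSpace ℝ (Fin N))} (hΩo : IsOpen Ω)
    (hΩc : Convex ℝ Ω) (hΩne : Ω.Nonempty) (d : ℝ)
    (x₀ e : EuclideanSpace ℝ (Fin N)) (hx₀ : x₀ ∈ closure Ω) (he : ‖e‖ = 1)
    (hd : ∀ x ∈ Ω, ‖x - x₀‖ ≤ d) (k : ℝ) (hk : 0 < k) :
    ∃ δ : ℝ, 0 < δ ∧ ∀ (φ f : ℝ → ℝ) (ρ₀ Q : ℝ), Continuous φ → (∀ t, 0 ≤ φ t) →
      (∀ t, HasDerivAt f (-φ t) t) → Antitone f → (∀ t, 0 ≤ f t) → 0 ≤ Q →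
      (∀ ρ, 0 ≤ ρ → ∫ t in (0:ℝ)..ρ, (Ioi ρ₀).indicator φ t ^ p * t ^ (N-1) ≤
        Q * ∫ t in (0:ℝ)..ρ, f (max t ρ₀) ^ p * t ^ (N-1)) →
      (∫⁻ x in Ω, ENNReal.ofReal
          (‖fderiv ℝ (fun x => f (max (k * ‖Aop e (x - x₀)‖) ρ₀)) x‖ ^ p)) +
        ENNReal.ofReal (k ^ p * Q * δ) *
          ∫⁻ x in Ω, ENNReal.ofReal (f (max (k * ‖Aop e (x - x₀)‖) ρ₀) ^ p) ≤
      ENNReal.ofReal (k ^ p * Q) *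
          ∫⁻ x in Ω, ENNReal.ofReal (f (max (k * ‖Aop e (x - x₀)‖) ρ₀) ^ p) := by
  have hp0 : 0 ≤ p := by linarith
  obtain ⟨z, hz, hzoff⟩ := exists_off_axis hN hΩo hΩne x₀ e he
  set s₀ := ‖z - x₀‖ with hs₀
  have hs₀p : 0 < s₀ := by
    rcases (norm_nonneg (z - x₀)).eq_or_lt with h | h
    · rw [hs₀, ← h] at hzoff
      nlinarith [sq_nonneg (inner ℝ e (z - x₀) : ℝ)]
    · exact h
  set b : EuclideanSpace ℝ (Fin N) → ℝ := fun y => ‖Aop e (Aop e y)‖ / ‖Aop e y‖ with hb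
  have hpos : ∀ θ : sphere (0 : EuclideanSpace ℝ (Fin N)) 1, 1 / 2 ≤ ‖Aop e θ.1‖ := by
    intro θ
    have := Aop_ge e θ.1 he
    simpa using this
  have hle1 : ∀ θ : sphere (0 : EuclideanSpace ℝ (Fin N)) 1, ‖Aop e θ.1‖ ≤ 1 := by
    intro θ
    have := Aop_le e θ.1 he
    simpa using this
  have hb0 : ∀ y, 0 ≤ b y := fun y => by simp only [hb]; positivity
  have hb1 : ∀ y, b y ≤ 1 := fun y => div_le_one_of_le₀ (Aop_le e _ he) (norm_nonneg _)
  -- the direction of z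
  let θz : sphere (0 : EuclideanSpace ℝ (Fin N)) 1 := ⟨s₀⁻¹ • (z - x₀), by
    simp only [mem_sphere_iff_norm, sub_zero, norm_smul, norm_inv, Real.norm_eq_abs, abs_of_pos hs₀p]
    rw [← hs₀]; field_simp⟩
  have hbz : b θz.1 < 1 := by
    have h1 : (inner ℝ e θz.1 : ℝ) ^ 2 < ‖θz.1‖ ^ 2 := by
      simp only [θz, inner_smul_right, norm_smul, mul_pow, norm_inv, Real.norm_eq_abs, inv_pow, sq_abs]
      gcongr
    simp only [hb]
    rw [div_lt_one (by linarith [hpos θz])]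
    exact Aop_lt' e _ he h1
  set b₁ := (1 + b θz.1) / 2 with hb₁
  have hb₁0 : 0 ≤ b₁ := by have := hb0 θz.1; positivity
  have hb₁1 : b₁ < 1 := by linarith
  set δ₁ := 1 - b₁ ^ p with hδ₁
  have hδ₁p : 0 < δ₁ := by
    have := Real.rpow_lt_one hb₁0 hb₁1 (by linarith : 0 < p)
    linarith
  set σ := (volume : Measure (EuclideanSpace ℝ (Fin N))).toSphere with hσ
  set Θ : Set (sphere (0 : EuclideanSpace ℝ (Fin N)) 1) :=
    {θ | b θ.1 < b₁} ∩ {θ | x₀ + s₀ • θ.1 ∈ Ω} with hΘ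
  have hbc : Continuous fun θ : sphere (0 : EuclideanSpace ℝ (Fin N)) 1 => b θ.1 := by
    refine Continuous.div (by fun_prop) (by fun_prop) fun θ => ?_
    linarith [hpos θ]
  have hΘo : IsOpen Θ := (isOpen_lt hbc continuous_const).inter
    (hΩo.preimage (f := fun θ : sphere (0 : EuclideanSpace ℝ (Fin N)) 1 => x₀ + s₀ • θ.1) (by fun_prop))
  have hΘz : θz ∈ Θ := by
    refine ⟨?_, ?_⟩
    · show b θz.1 < b₁
      linarith
    · show x₀ + s₀ • (s₀⁻¹ • (z - x₀)) ∈ Ω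
      rw [smul_smul, mul_inv_cancel₀ hs₀p.ne', one_smul, add_sub_cancel]
      exact hz
  have hΘpos : 0 < σ Θ := hΘo.measure_pos σ ⟨θz, hΘz⟩
  have hΘr : 0 < (σ Θ).toReal := ENNReal.toReal_pos hΘpos.ne' (measure_ne_top _ _)
  have hur : 0 < (σ univ).toReal := hΘr.trans_le
    (ENNReal.toReal_mono (measure_ne_top _ _) (measure_mono (subset_univ _)))
  set m := max 2 ((d + 1) / s₀) with hm
  have hm2 : 2 ≤ m := le_max_left _ _
  have hmd : d + 1 ≤ m * s₀ := by
    rw [← div_le_iff₀ hs₀p]; exact le_max_right _ _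
  set C := m ^ (N - 1 + 1) with hC
  have hCp : 0 < C := by positivity
  refine ⟨δ₁ * (σ Θ).toReal / (C * (σ univ).toReal), by positivity, ?_⟩
  set δ := δ₁ * (σ Θ).toReal / (C * (σ univ).toReal) with hδ
  have hδp : 0 < δ := by positivity
  intro φ f ρ₀ Q hφ hφ0 hfd hfa hf0 hQ hineq
  set F : ℝ → ℝ := fun t => f (max t ρ₀) with hF
  have hfc : Continuous f := continuous_iff_continuousAt.2 fun t => (hfd t).continuousAt
  have hFc : Continuous F := hfc.comp (by fun_prop)
  have hFa : Antitone F := fun a b hab => hfa (max_le_max_right _ hab)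
  have hF0 : ∀ t, 0 ≤ F t := fun t => hf0 _
  set u : EuclideanSpace ℝ (Fin N) → ℝ := fun x => f (max (k * ‖Aop e (x - x₀)‖) ρ₀) with hu
  have huc : Continuous u := hfc.comp (by fun_prop)
  have mA : Measurable fun x => ENNReal.ofReal (‖fderiv ℝ u x‖ ^ p) :=
    ((measurable_fderiv ℝ u).norm.pow_const p).ennreal_ofReal
  have mB : Measurable fun x => ENNReal.ofReal (u x ^ p) :=
    (huc.measurable.pow_const p).ennreal_ofReal
  rw [polar_set hN Ω hΩo.measurableSet x₀ _ mA, polar_set hN Ω hΩo.measurableSet x₀ _ mB]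
  set T : sphere (0 : EuclideanSpace ℝ (Fin N)) 1 → Set ℝ :=
    fun θ => {t : ℝ | 0 < t ∧ x₀ + t • θ.1 ∈ Ω} with hT
  have mT : ∀ θ, MeasurableSet (T θ) := fun θ =>
    measurableSet_Ioi.inter ((hΩo.preimage (by fun_prop : Continuous fun t : ℝ => x₀ + t • θ.1)).measurableSet)
  set D : sphere (0 : EuclideanSpace ℝ (Fin N)) 1 → ENNReal :=
    fun θ => ∫⁻ t in T θ, ENNReal.ofReal (u (x₀ + t • θ.1) ^ p) * ENNReal.ofReal (t ^ (N-1)) with hD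
  have hAt : ∀ (θ : sphere (0 : EuclideanSpace ℝ (Fin N)) 1) (t : ℝ), 0 < t →
      ‖Aop e (t • θ.1)‖ = t * ‖Aop e θ.1‖ := by
    intro θ t ht
    rw [map_smul, norm_smul, Real.norm_eq_abs, abs_of_pos ht]
  have hbt : ∀ (θ : sphere (0 : EuclideanSpace ℝ (Fin N)) 1) (t : ℝ), 0 < t →
      b (t • θ.1) = b θ.1 := by
    intro θ t ht
    simp only [hb, map_smul, norm_smul, Real.norm_eq_abs, abs_of_pos ht]
    have := hpos θ
    field_simp
  have hut : ∀ (θ : sphere (0 : EuclideanSpace ℝ (Fin N)) 1) (t : ℝ), 0 < t →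
      u (x₀ + t • θ.1) = F (k * ‖Aop e θ.1‖ * t) := by
    intro θ t ht
    simp only [hu, hF, add_sub_cancel_left, hAt θ t ht]
    congr 2; ring
  have cF : ∀ a : ℝ, Continuous fun t => F (a * t) ^ p * t ^ (N-1) := fun a =>
    ((hFc.comp (by fun_prop : Continuous fun t => a * t)).rpow_const (fun _ => Or.inr hp0)).mul (by fun_prop)
  have nF : ∀ a : ℝ, ∀ t, 0 ≤ t → 0 ≤ F (a * t) ^ p * t ^ (N-1) := fun a t ht =>
    mul_nonneg (Real.rpow_nonneg (hF0 _) _) (pow_nonneg ht _)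
  have hDF : ∀ θ, D θ = ∫⁻ t in T θ, ENNReal.ofReal (F (k * ‖Aop e θ.1‖ * t) ^ p * t ^ (N-1)) := by
    intro θ
    refine setLIntegral_congr_fun (mT θ) fun t ht => ?_
    rw [hut θ t ht.1, ENNReal.ofReal_mul (Real.rpow_nonneg (hF0 _) _)]
  -- step 1
  have step1 : ∀ θ, ∫⁻ t in T θ, ENNReal.ofReal (‖fderiv ℝ u (x₀ + t • θ.1)‖ ^ p) *
      ENNReal.ofReal (t ^ (N-1)) ≤ ENNReal.ofReal (k ^ p * Q) * (ENNReal.ofReal (b θ.1 ^ p) * D θ) := by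
    intro θ
    set a := k * ‖Aop e θ.1‖ with ha
    have hap : 0 < a := mul_pos hk (by linarith [hpos θ])
    obtain ⟨ρ, hρ, hTρ⟩ := ray_set hΩo hΩc hx₀ d hd θ
    have hgrad : ∀ᵐ t ∂(volume.restrict (T θ)), ENNReal.ofReal (‖fderiv ℝ u (x₀ + t • θ.1)‖ ^ p) *
      ENNReal.ofReal (t ^ (N-1)) ≤ ENNReal.ofReal ((k * b θ.1) ^ p) *
        ENNReal.ofReal ((Ioi ρ₀).indicator φ (a * t) ^ p * t ^ (N-1)) := by
      have hne : ∀ᵐ t ∂(volume.restrict (T θ)), t ≠ ρ₀ / a := by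
        refine ae_restrict_of_ae ?_
        exact (countable_singleton (ρ₀ / a)).ae_notMem volume
      filter_upwards [ae_restrict_mem (mT θ), hne] with t ht htne
      have ht0 : 0 < t := ht.1
      have hind : 0 ≤ (Ioi ρ₀).indicator φ (a * t) := indicator_nonneg (fun _ _ => hφ0 _) _
      have hθ0 : θ.1 ≠ 0 := by
        intro h; have := hpos θ; rw [h] at this; simp at this; linarith
      have hg := grad_u e x₀ (x₀ + t • θ.1) he k hk (by simp [ht0.ne', hθ0]) φ f hφ0 hfd ρ₀ (by
        rw [add_sub_cancel_left, hAt θ t ht0]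
        intro h
        apply htne
        rw [← h]; field_simp; rw [ha])
      rw [add_sub_cancel_left] at hg
      have e1 : k * ‖Aop e (t • θ.1)‖ = a * t := by rw [hAt θ t ht0]; ring
      have e2 : ‖Aop e (Aop e (t • θ.1))‖ / ‖Aop e (t • θ.1)‖ = b θ.1 := hbt θ t ht0
      rw [e1, e2] at hg
      rw [← ENNReal.ofReal_mul (Real.rpow_nonneg (norm_nonneg _) _),
        ← ENNReal.ofReal_mul (Real.rpow_nonneg (mul_nonneg hk.le (hb0 _)) _)]
      refine ENNReal.ofReal_le_ofReal ?_
      rw [← mul_assoc, ← Real.mul_rpow (mul_nonneg hk.le (hb0 _)) hind]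
      refine mul_le_mul_of_nonneg_right ?_ (pow_nonneg ht0.le _)
      refine Real.rpow_le_rpow (norm_nonneg _) ?_ hp0
      rw [mul_comm]; exact hg
    refine (lintegral_mono_ae hgrad).trans ?_
    rw [lintegral_const_mul' _ _ ENNReal.ofReal_ne_top, hDF, Measure.restrict_congr_set hTρ]
    have iψ : IntervalIntegrable (fun t => (Ioi ρ₀).indicator φ (a * t) ^ p * t ^ (N-1)) volume 0 ρ := by
      have hi : (fun t => (Ioi ρ₀).indicator φ (a * t) ^ p * t ^ (N-1)) =
          ((fun t => a * t) ⁻¹' (Ioi ρ₀)).indicator (fun t => φ (a * t) ^ p * t ^ (N-1)) := by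
        ext t
        by_cases h : a * t ∈ Ioi ρ₀
        · rw [indicator_of_mem h, indicator_of_mem (by exact h)]
        · rw [indicator_of_notMem h, indicator_of_notMem (by exact h),
            Real.zero_rpow (by linarith : p ≠ 0), zero_mul]
      have c1 : Continuous (fun t => φ (a * t) ^ p * t ^ (N-1)) :=
        ((hφ.comp (by fun_prop : Continuous fun t => a * t)).rpow_const (fun _ => Or.inr hp0)).mul (by fun_prop)
      have hms : MeasurableSet ((fun t : ℝ => a * t) ⁻¹' (Ioi ρ₀)) :=
        (measurable_const_mul a) measurableSet_Ioi
      have := c1.intervalIntegrable (μ := volume) 0 ρ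
      rw [hi]
      exact ⟨this.1.indicator hms, this.2.indicator hms⟩
    rw [lint_Ioo _ ρ hρ iψ (fun t ht => mul_nonneg (Real.rpow_nonneg
        (indicator_nonneg (fun _ _ => hφ0 _) _) _) (pow_nonneg ht _)),
      lint_Ioo _ ρ hρ ((cF a).intervalIntegrable _ _) (nF a)]
    have hsc := scaled_ineq p Q a hap (N-1) _ F hineq ρ hρ
    rw [← ENNReal.ofReal_mul (Real.rpow_nonneg (mul_nonneg hk.le (hb0 _)) _),
      ← ENNReal.ofReal_mul (Real.rpow_nonneg (hb0 _) _), ← ENNReal.ofReal_mul (by positivity)]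
    refine ENNReal.ofReal_le_ofReal ?_
    rw [Real.mul_rpow hk.le (hb0 _)]
    have hbp := Real.rpow_nonneg (hb0 θ.1) p
    calc k ^ p * b θ.1 ^ p * ∫ t in (0:ℝ)..ρ, (Ioi ρ₀).indicator φ (a * t) ^ p * t ^ (N-1)
        ≤ k ^ p * b θ.1 ^ p * (Q * ∫ t in (0:ℝ)..ρ, F (a * t) ^ p * t ^ (N-1)) := by gcongr
      _ = _ := by ring
  -- step 2
  set M := ∫ t in (0:ℝ)..s₀, F (k * t) ^ p * t ^ (N-1) with hM
  have hM0 : 0 ≤ M := intervalIntegral.integral_nonneg hs₀p.le fun t ht => nF k t ht.1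
  have up : ∀ θ, D θ ≤ ENNReal.ofReal (C * M) := by
    intro θ
    rw [hDF]
    have hsub : T θ ⊆ Ioo 0 (m * s₀) := by
      intro t ht
      refine ⟨ht.1, ?_⟩
      have := hd _ ht.2
      rw [add_sub_cancel_left, norm_smul, Real.norm_eq_abs, abs_of_pos ht.1] at this
      simp at this
      linarith
    calc _ ≤ ∫⁻ t in Ioo 0 (m * s₀), ENNReal.ofReal (F (k * ‖Aop e θ.1‖ * t) ^ p * t ^ (N-1)) :=
          lintegral_mono_set hsub
      _ ≤ ∫⁻ t in Ioo 0 (m * s₀), ENNReal.ofReal (F (k / 2 * t) ^ p * t ^ (N-1)) := by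
          refine setLIntegral_mono' measurableSet_Ioo fun t ht => ?_
          refine ENNReal.ofReal_le_ofReal ?_
          refine mul_le_mul_of_nonneg_right ?_ (pow_nonneg ht.1.le _)
          refine Real.rpow_le_rpow (hF0 _) (hFa ?_) hp0
          refine mul_le_mul_of_nonneg_right ?_ ht.1.le
          nlinarith [hpos θ]
      _ = ENNReal.ofReal (∫ t in (0:ℝ)..(m * s₀), F (k / 2 * t) ^ p * t ^ (N-1)) :=
          lint_Ioo _ _ (by positivity) ((cF _).intervalIntegrable _ _) (nF _)
      _ ≤ _ := ENNReal.ofReal_le_ofReal (doubling p k m s₀ hp0 hk hm2 hs₀p (N-1) F hFa hFc hF0)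
  have low : ∀ θ ∈ Θ, ENNReal.ofReal M ≤ D θ := by
    intro θ hθ
    rw [hDF]
    have hsub : Ioo 0 s₀ ⊆ T θ := fun t ht =>
      ⟨ht.1, ray_mem hΩo hΩc hx₀ θ.1 ht.1 ht.2.le hθ.2⟩
    calc _ = ∫⁻ t in Ioo 0 s₀, ENNReal.ofReal (F (k * t) ^ p * t ^ (N-1)) :=
          (lint_Ioo _ _ hs₀p.le ((cF _).intervalIntegrable _ _) (nF _)).symm
      _ ≤ ∫⁻ t in Ioo 0 s₀, ENNReal.ofReal (F (k * ‖Aop e θ.1‖ * t) ^ p * t ^ (N-1)) := by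
          refine setLIntegral_mono' measurableSet_Ioo fun t ht => ?_
          refine ENNReal.ofReal_le_ofReal ?_
          refine mul_le_mul_of_nonneg_right ?_ (pow_nonneg ht.1.le _)
          refine Real.rpow_le_rpow (hF0 _) (hFa ?_) hp0
          refine mul_le_mul_of_nonneg_right ?_ ht.1.le
          nlinarith [hle1 θ]
      _ ≤ _ := lintegral_mono_set hsub
  -- step 3
  have pt : ∀ θ, ENNReal.ofReal (b θ.1 ^ p) * D θ +
      Θ.indicator (fun _ => ENNReal.ofReal (δ₁ * M)) θ ≤ D θ := by
    intro θ
    by_cases h : θ ∈ Θ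
    · rw [indicator_of_mem h, ENNReal.ofReal_mul hδ₁p.le]
      calc _ ≤ ENNReal.ofReal (b θ.1 ^ p) * D θ + ENNReal.ofReal δ₁ * D θ := by
            gcongr; exact low θ h
        _ = ENNReal.ofReal (b θ.1 ^ p + δ₁) * D θ := by
            rw [ENNReal.ofReal_add (Real.rpow_nonneg (hb0 _) _) hδ₁p.le, add_mul]
        _ ≤ 1 * D θ := by
            gcongr
            rw [ENNReal.ofReal_le_one]
            have := Real.rpow_le_rpow (hb0 θ.1) (le_of_lt h.1) hp0
            linarith
        _ = D θ := one_mul _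
    · rw [indicator_of_notMem h, add_zero]
      calc _ ≤ 1 * D θ := by
            gcongr
            rw [ENNReal.ofReal_le_one]
            exact Real.rpow_le_one (hb0 _) (hb1 _) hp0
        _ = D θ := one_mul _
  have I1 : ∫⁻ θ, ENNReal.ofReal (b θ.1 ^ p) * D θ ∂σ + ENNReal.ofReal (δ₁ * M) * σ Θ ≤ ∫⁻ θ, D θ ∂σ := by
    have := lintegral_mono (μ := σ) pt
    rwa [lintegral_add_right _ (measurable_const.indicator hΘo.measurableSet),
      lintegral_indicator hΘo.measurableSet, setLIntegral_const] at this
  have I2 : ENNReal.ofReal δ * ∫⁻ θ, D θ ∂σ ≤ ENNReal.ofReal (δ₁ * M) * σ Θ := by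
    calc _ ≤ ENNReal.ofReal δ * (ENNReal.ofReal (C * M) * σ univ) := by
          gcongr
          rw [← lintegral_const]
          exact lintegral_mono up
      _ = ENNReal.ofReal (δ₁ * M) * σ Θ := by
          rw [← ENNReal.ofReal_toReal (measure_ne_top σ univ), ← ENNReal.ofReal_toReal (measure_ne_top σ Θ),
            ← ENNReal.ofReal_mul (by positivity), ← ENNReal.ofReal_mul (by positivity),
            ← ENNReal.ofReal_mul (by positivity)]
          congr 1
          rw [hδ]; field_simp
  calc _ ≤ (∫⁻ θ, ENNReal.ofReal (k ^ p * Q) * (ENNReal.ofReal (b θ.1 ^ p) * D θ) ∂σ) +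
        ENNReal.ofReal (k ^ p * Q * δ) * ∫⁻ θ, D θ ∂σ := by
        gcongr with θ; exact step1 θ
    _ = ENNReal.ofReal (k ^ p * Q) * (∫⁻ θ, ENNReal.ofReal (b θ.1 ^ p) * D θ ∂σ +
        ENNReal.ofReal δ * ∫⁻ θ, D θ ∂σ) := by
        rw [lintegral_const_mul' _ _ ENNReal.ofReal_ne_top, mul_add, ENNReal.ofReal_mul (p := k ^ p * Q) (q := δ) (by positivity), mul_assoc (ENNReal.ofReal (k ^ p * Q))]
    _ ≤ _ := by
        gcongr
        exact (add_le_add_right I2 _).trans I1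

lemma lip_integrable {N : ℕ} {p : ℝ} (hp : 0 ≤ p) {Ω : Set (EuclideanSpace ℝ (Fin N))}
    (hΩm : MeasurableSet Ω)
    (hΩb : Bornology.IsBounded Ω) {u : EuclideanSpace ℝ (Fin N) → ℝ} {K : NNReal}
    (hu : LipschitzWith K u) :
    IntegrableOn (fun x => ‖fderiv ℝ u x‖ ^ p) Ω := by
  have hfin : volume Ω ≠ ⊤ := hΩb.measure_lt_top.ne
  refine Measure.integrableOn_of_bounded (M := (K:ℝ) ^ p) hfin ?_ ?_
  · exact ((measurable_fderiv ℝ u).norm.pow_const p).aestronglyMeasurable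
  · refine Filter.Eventually.of_forall fun x => ?_
    rw [Real.norm_of_nonneg (by positivity)]
    exact Real.rpow_le_rpow (norm_nonneg _) (norm_fderiv_le_of_lipschitz ℝ hu) hp

lemma cont_integrable {N : ℕ} {Ω : Set (EuclideanSpace ℝ (Fin N))}
    (hΩb : Bornology.IsBounded Ω) {u : EuclideanSpace ℝ (Fin N) → ℝ} (hu : Continuous u) :
    IntegrableOn u Ω :=
  (hu.continuousOn.integrableOn_compact hΩb.isCompact_closure).mono_set subset_closure

lemma pos_int {N : ℕ} {Ω : Set (EuclideanSpace ℝ (Fin N))} (hΩo : IsOpen Ω)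
    (hΩb : Bornology.IsBounded Ω) {u : EuclideanSpace ℝ (Fin N) → ℝ} (hu : Continuous u)
    (h0 : ∀ x, 0 ≤ u x) (hpos : ∃ x ∈ Ω, 0 < u x) : 0 < ∫ x in Ω, u x := by
  rw [setIntegral_pos_iff_support_of_nonneg_ae (Filter.Eventually.of_forall h0) (cont_integrable hΩb hu)]
  obtain ⟨x, hx, hux⟩ := hpos
  have : IsOpen (Function.support u ∩ Ω) := hu.isOpen_support.inter hΩo
  exact this.measure_pos _ ⟨x, hux.ne', hx⟩

lemma to_real_ineq {N : ℕ} {p : ℝ} (hp : 0 ≤ p) {Ω : Set (EuclideanSpace ℝ (Fin N))} (hΩo : IsOpen Ω)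
    (hΩb : Bornology.IsBounded Ω) {u : EuclideanSpace ℝ (Fin N) → ℝ} {K : NNReal}
    (hu : LipschitzWith K u) (hu0 : ∀ x, 0 ≤ u x) {a δ : ℝ} (ha : 0 ≤ a) (hδ : 0 ≤ δ)
    (h : (∫⁻ x in Ω, ENNReal.ofReal (‖fderiv ℝ u x‖ ^ p)) + ENNReal.ofReal (a * δ) *
      (∫⁻ x in Ω, ENNReal.ofReal (u x ^ p)) ≤ ENNReal.ofReal a * ∫⁻ x in Ω, ENNReal.ofReal (u x ^ p)) :
    ∫ x in Ω, ‖fderiv ℝ u x‖ ^ p ≤ a * (1 - δ) * ∫ x in Ω, u x ^ p := by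
  have i1 := lip_integrable hp hΩo.measurableSet hΩb hu
  have i2 : IntegrableOn (fun x => u x ^ p) Ω :=
    cont_integrable hΩb (hu.continuous.rpow_const (fun _ => Or.inr hp))
  have n2 : ∀ x, 0 ≤ u x ^ p := fun x => Real.rpow_nonneg (hu0 x) _
  have n1 : ∀ x, 0 ≤ ‖fderiv ℝ u x‖ ^ p := fun x => by positivity
  have m2 : 0 ≤ ∫ x in Ω, u x ^ p := integral_nonneg n2
  have m1 : 0 ≤ ∫ x in Ω, ‖fderiv ℝ u x‖ ^ p := integral_nonneg n1
  rw [← ofReal_integral_eq_lintegral_ofReal i1 (Filter.Eventually.of_forall n1),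
    ← ofReal_integral_eq_lintegral_ofReal i2 (Filter.Eventually.of_forall n2),
    ← ENNReal.ofReal_mul (by positivity), ← ENNReal.ofReal_mul ha,
    ← ENNReal.ofReal_add m1 (by positivity), ENNReal.ofReal_le_ofReal_iff (by positivity)] at h
  linarith

lemma glue {N : ℕ} {p : ℝ} (hp : 1 < p) {Ω : Set (EuclideanSpace ℝ (Fin N))} (hΩo : IsOpen Ω)
    (hΩb : Bornology.IsBounded Ω) {u v : EuclideanSpace ℝ (Fin N) → ℝ} {K L : NNReal}
    (hu : LipschitzWith K u) (hu0 : ∀ x, 0 ≤ u x) (hv : LipschitzWith L v) (hv0 : ∀ x, 0 ≤ v x)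
    (hup : ∃ x ∈ Ω, 0 < u x) (hvp : ∃ x ∈ Ω, 0 < v x)
    (hd : ∀ x, u =ᶠ[nhds x] 0 ∨ v =ᶠ[nhds x] 0) (a : ℝ)
    (h1 : ∫ x in Ω, ‖fderiv ℝ u x‖ ^ p ≤ a * ∫ x in Ω, u x ^ p)
    (h2 : ∫ x in Ω, ‖fderiv ℝ v x‖ ^ p ≤ a * ∫ x in Ω, v x ^ p) :
    muPQ p p Ω ≤ a := by
  have hp0 : 0 < p := by linarith
  have hp1 : 0 < p - 1 := by linarith
  set I := ∫ x in Ω, u x ^ (p-1) with hI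
  set J := ∫ x in Ω, v x ^ (p-1) with hJ
  have cI : ∀ s : ℝ, 0 < s → Continuous fun x => u x ^ s := fun s hs =>
    hu.continuous.rpow_const (fun _ => Or.inr hs.le)
  have cJ : ∀ s : ℝ, 0 < s → Continuous fun x => v x ^ s := fun s hs =>
    hv.continuous.rpow_const (fun _ => Or.inr hs.le)
  have nI : ∀ s x, 0 ≤ u x ^ (s:ℝ) := fun s x => Real.rpow_nonneg (hu0 x) _
  have nJ : ∀ s x, 0 ≤ v x ^ (s:ℝ) := fun s x => Real.rpow_nonneg (hv0 x) _
  have pI : ∀ s : ℝ, 0 < s → 0 < ∫ x in Ω, u x ^ s := fun s hs =>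
    pos_int hΩo hΩb (cI s hs) (nI s) (by
      obtain ⟨x, hx, h⟩ := hup; exact ⟨x, hx, Real.rpow_pos_of_pos h _⟩)
  have pJ : ∀ s : ℝ, 0 < s → 0 < ∫ x in Ω, v x ^ s := fun s hs =>
    pos_int hΩo hΩb (cJ s hs) (nJ s) (by
      obtain ⟨x, hx, h⟩ := hvp; exact ⟨x, hx, Real.rpow_pos_of_pos h _⟩)
  have hIp : 0 < I := pI _ hp1
  have hJp : 0 < J := pJ _ hp1
  set α := J ^ (p-1)⁻¹ with hα
  set β := I ^ (p-1)⁻¹ with hβ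
  have hαp : 0 < α := Real.rpow_pos_of_pos hJp _
  have hβp : 0 < β := Real.rpow_pos_of_pos hIp _
  have hαJ : α ^ (p-1) = J := Real.rpow_inv_rpow hJp.le hp1.ne'
  have hβI : β ^ (p-1) = I := Real.rpow_inv_rpow hIp.le hp1.ne'
  set w : EuclideanSpace ℝ (Fin N) → ℝ := fun x => α * u x - β * v x with hw
  have hlip : LipschitzWith (‖α‖₊ * K + ‖β‖₊ * L) w := by
    refine LipschitzWith.sub ?_ ?_
    · exact (lipschitzWith_smul α).comp hu
    · exact (lipschitzWith_smul β).comp hv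
  have z1 : ∀ s : ℝ, 0 < s → (0:ℝ) ^ s = 0 := fun s hs => Real.zero_rpow hs.ne'
  have hpp : ∀ s : ℝ, 0 ≤ s → s ^ (p-2) * s = s ^ (p-1) := by
    intro s hs
    rcases hs.eq_or_lt with rfl | hs
    · rw [z1 _ hp1, mul_zero]
    · rw [← Real.rpow_add_one hs.ne']; congr 1; ring
  have ew1 : ∀ x, |w x| ^ (p-2) * w x = J * u x ^ (p-1) - I * v x ^ (p-1) := by
    intro x
    rcases hd x with h | h
    · have hx : u x = 0 := h.eq_of_nhds
      have hwx : w x = -(β * v x) := by simp [hw, hx]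
      have := mul_nonneg hβp.le (hv0 x)
      rw [hwx, abs_neg, abs_of_nonneg this, mul_neg, hpp _ this, Real.mul_rpow hβp.le (hv0 x), hβI, hx,
        z1 _ hp1]; ring
    · have hx : v x = 0 := h.eq_of_nhds
      have hwx : w x = (α * u x) := by simp [hw, hx]
      have := mul_nonneg hαp.le (hu0 x)
      rw [hwx, abs_of_nonneg this, hpp _ this, Real.mul_rpow hαp.le (hu0 x), hαJ, hx,
        z1 _ hp1]; ring
  have ew2 : ∀ x, |w x| ^ p = α ^ p * u x ^ p + β ^ p * v x ^ p := by
    intro x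
    rcases hd x with h | h
    · have hx : u x = 0 := h.eq_of_nhds
      have hwx : w x = -(β * v x) := by simp [hw, hx]
      have := mul_nonneg hβp.le (hv0 x)
      rw [hwx, abs_neg, abs_of_nonneg this, Real.mul_rpow hβp.le (hv0 x), hx, z1 _ hp0]; ring
    · have hx : v x = 0 := h.eq_of_nhds
      have hwx : w x = (α * u x) := by simp [hw, hx]
      have := mul_nonneg hαp.le (hu0 x)
      rw [hwx, abs_of_nonneg this, Real.mul_rpow hαp.le (hu0 x), hx, z1 _ hp0]; ring
  have ew3 : ∀ x, ‖fderiv ℝ w x‖ ^ p = α ^ p * ‖fderiv ℝ u x‖ ^ p + β ^ p * ‖fderiv ℝ v x‖ ^ p := by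
    intro x
    rcases hd x with h | h
    · have hx : fderiv ℝ u x = 0 := by rw [h.fderiv_eq]; simp
      have hwx : w =ᶠ[nhds x] (-β) • v := by
        filter_upwards [h] with y hy
        simp only [hw, hy]; simp
      rw [hwx.fderiv_eq, fderiv_const_smul_field, Pi.smul_apply, hx, norm_zero, z1 _ hp0, norm_smul, norm_neg, Real.norm_of_nonneg hβp.le,
        Real.mul_rpow hβp.le (norm_nonneg _)]; ring
    · have hx : fderiv ℝ v x = 0 := by rw [h.fderiv_eq]; simp
      have hwx : w =ᶠ[nhds x] α • u := by
        filter_upwards [h] with y hy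
        simp only [hw, hy]; simp
      rw [hwx.fderiv_eq, fderiv_const_smul_field, Pi.smul_apply, hx, norm_zero, z1 _ hp0, norm_smul, Real.norm_of_nonneg hαp.le,
        Real.mul_rpow hαp.le (norm_nonneg _)]; ring
  have e1 : (∫ x in Ω, |w x| ^ (p - 2) * w x) = 0 := by
    simp_rw [ew1]
    rw [integral_sub ((cont_integrable hΩb (cI _ hp1)).const_mul _) ((cont_integrable hΩb (cJ _ hp1)).const_mul _),
      integral_const_mul, integral_const_mul, ← hI, ← hJ]; ring
  have e2 : (∫ x in Ω, |w x| ^ p) = α ^ p * (∫ x in Ω, u x ^ p) + β ^ p * ∫ x in Ω, v x ^ p := by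
    simp_rw [ew2]
    rw [integral_add ((cont_integrable hΩb (cI _ hp0)).const_mul _) ((cont_integrable hΩb (cJ _ hp0)).const_mul _),
      integral_const_mul, integral_const_mul]
  have e3 : (∫ x in Ω, ‖fderiv ℝ w x‖ ^ p) = α ^ p * (∫ x in Ω, ‖fderiv ℝ u x‖ ^ p) +
      β ^ p * ∫ x in Ω, ‖fderiv ℝ v x‖ ^ p := by
    simp_rw [ew3]
    rw [integral_add ((lip_integrable hp0.le hΩo.measurableSet hΩb hu).const_mul _)
      ((lip_integrable hp0.le hΩo.measurableSet hΩb hv).const_mul _),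
      integral_const_mul, integral_const_mul]
  have q1 := pI p hp0
  have q2 := pJ p hp0
  have a1 : 0 < α ^ p := Real.rpow_pos_of_pos hαp _
  have a2 : 0 < β ^ p := Real.rpow_pos_of_pos hβp _
  have hR : rayleighQuot p p Ω w ≤ a := by
    unfold rayleighQuot
    rw [div_self hp0.ne', Real.rpow_one, e2, e3, div_le_iff₀ (by positivity)]
    nlinarith [mul_le_mul_of_nonneg_left h1 a1.le, mul_le_mul_of_nonneg_left h2 a2.le]
  refine le_trans (csInf_le ?_ ⟨w, _, hlip.lipschitzOnWith, ?_, e1, rfl⟩) hR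
  · refine ⟨0, ?_⟩
    rintro _ ⟨v, _, _, _, _, rfl⟩
    unfold rayleighQuot
    exact div_nonneg (integral_nonneg fun x => by positivity)
      (Real.rpow_nonneg (integral_nonneg fun x => by positivity) _)
  · obtain ⟨x, hx, hux⟩ := hup
    refine ⟨x, hx, ?_⟩
    rcases hd x with h | h
    · exact absurd h.eq_of_nhds hux.ne'
    · have hx : v x = 0 := h.eq_of_nhds
      simp [hw, hx, hαp.ne', hux.ne']

lemma u_props {N : ℕ} (φ f : ℝ → ℝ) (K : ℝ) (hφ0 : ∀ t, 0 ≤ φ t) (hK : ∀ t, φ t ≤ K)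
    (hfd : ∀ t, HasDerivAt f (-φ t) t) (r' ρ₀ k : ℝ) (hf0 : ∀ t, r' ≤ t → f t = 0)
    (hρ₀ : 0 ≤ ρ₀) (hρf : 0 < f ρ₀) (hk : 0 < k)
    (e x₀ : EuclideanSpace ℝ (Fin N)) :
    (∃ L : NNReal, LipschitzWith L (fun x => f (max (k * ‖Aop e (x - x₀)‖) ρ₀))) ∧
    (∀ x, r' < k * ‖Aop e (x - x₀)‖ → (fun x => f (max (k * ‖Aop e (x - x₀)‖) ρ₀)) =ᶠ[nhds x] 0) ∧
    (∀ Ω : Set (EuclideanSpace ℝ (Fin N)), x₀ ∈ closure Ω →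
      ∃ x ∈ Ω, 0 < f (max (k * ‖Aop e (x - x₀)‖) ρ₀)) := by
  have hlf : LipschitzWith K.toNNReal f := by
    refine lipschitzWith_of_nnnorm_deriv_le (fun t => (hfd t).differentiableAt) fun t => ?_
    rw [(hfd t).deriv, nnnorm_neg, ← NNReal.coe_le_coe, coe_nnnorm, Real.norm_of_nonneg (hφ0 t)]
    exact (hK t).trans (Real.le_coe_toNNReal K)
  have l1 : LipschitzWith (1 * (‖k‖₊ * (1 * (‖Aop e‖₊ * 1))))
      (fun x : EuclideanSpace ℝ (Fin N) => max (k * ‖Aop e (x - x₀)‖) ρ₀) := by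
    have a1 : LipschitzWith 1 (fun x : EuclideanSpace ℝ (Fin N) => x - x₀) :=
      LipschitzWith.of_dist_le_mul fun x y => by simp
    have a2 := (Aop e).lipschitz.comp a1
    have a3 := (lipschitzWith_one_norm (E := EuclideanSpace ℝ (Fin N))).comp a2
    have a4 := (lipschitzWith_smul k (β := ℝ)).comp a3
    have a5 := a4.max_const ρ₀
    rw [one_mul]
    exact a5
  have hc : Continuous (fun x : EuclideanSpace ℝ (Fin N) => k * ‖Aop e (x - x₀)‖) := by fun_prop
  refine ⟨⟨_, hlf.comp l1⟩, ?_, ?_⟩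
  · intro x hx
    filter_upwards [hc.continuousAt.eventually (lt_mem_nhds hx)] with y hy
    exact hf0 _ (hy.le.trans (le_max_left _ _))
  · intro Ω hx
    have hopen : IsOpen {x | 0 < f (max (k * ‖Aop e (x - x₀)‖) ρ₀)} :=
      isOpen_lt continuous_const (hlf.continuous.comp l1.continuous)
    obtain ⟨y, hy, hyΩ⟩ := mem_closure_iff.1 hx _ hopen (by simp [max_eq_right hρ₀, hρf])
    exact ⟨y, hyΩ, hy⟩

lemma ne_lambda {N : ℕ} (p : ℝ) (c : EuclideanSpace ℝ (Fin N)) (r : ℝ) (hr : 0 < r) :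
    { R : ℝ | ∃ v : EuclideanSpace ℝ (Fin N) → ℝ,
    ContDiff ℝ (⊤ : ℕ∞) v ∧ HasCompactSupport v ∧ tsupport v ⊆ ball c r ∧
    (∃ x ∈ ball c r, v x ≠ 0) ∧ R = rayleighQuot p p (ball c r) v }.Nonempty := by
  let b : ContDiffBump c := ⟨r / 4, r / 2, by positivity, by linarith⟩
  refine ⟨_, b, b.contDiff, b.hasCompactSupport, ?_, ⟨c, mem_ball_self hr, ?_⟩, rfl⟩
  · rw [b.tsupport_eq]
    exact closedBall_subset_ball (by simp only [b]; linarith)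
  · rw [b.one_of_mem_closedBall (mem_closedBall_self b.rIn_pos.le)]; exact one_ne_zero

lemma main_Q {N : ℕ} (hN : 2 ≤ N) (p : ℝ) (hp : 1 < p)
    (Ω : Set (EuclideanSpace ℝ (Fin N))) (hΩo : IsOpen Ω)
    (hΩb : Bornology.IsBounded Ω) (hΩc : Convex ℝ Ω) (hΩne : Ω.Nonempty)
    (c : EuclideanSpace ℝ (Fin N)) (r : ℝ) (hr : 0 < r)
    (x₀ x₁ e : EuclideanSpace ℝ (Fin N)) (hx₀ : x₀ ∈ closure Ω) (hx₁ : x₁ ∈ closure Ω)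
    (d : ℝ) (hd : 0 < d) (h0d : ∀ x ∈ Ω, ‖x - x₀‖ ≤ d) (h1d : ∀ x ∈ Ω, ‖x - x₁‖ ≤ d)
    (he : ‖e‖ = 1) (hxe : x₁ - x₀ = d • e) :
    ∃ δ > 0, ∀ Q, lambdaPQ p p (ball c r) < Q →
      1 ≤ r ^ p * Q ∧ muPQ p p Ω ≤ (2 * r / d) ^ p * Q * (1 - δ) := by
  set k := 2 * r / d with hk
  have hkp : 0 < k := by positivity
  obtain ⟨δ₀, hδ₀, H₀⟩ := point_est hN p hp hΩo hΩc hΩne d x₀ e hx₀ he h0d k hkp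
  obtain ⟨δ₁, hδ₁, H₁⟩ := point_est hN p hp hΩo hΩc hΩne d x₁ e hx₁ he h1d k hkp
  refine ⟨min δ₀ δ₁, lt_min hδ₀ hδ₁, fun Q hQ => ?_⟩
  obtain ⟨_, ⟨v, hv, hvc, hvs, hne, rfl⟩, hvQ⟩ := exists_lt_of_csInf_lt (ne_lambda p c r hr) hQ
  have hQ0 : 0 ≤ Q := by
    refine le_trans ?_ hvQ.le
    unfold rayleighQuot
    exact div_nonneg (integral_nonneg fun x => by positivity)
      (Real.rpow_nonneg (integral_nonneg fun x => by positivity) _)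
  obtain ⟨φ, r', K, hφ, hφ0, hφK, hr', hφr, hlt⟩ := exists_ray hN p r Q hp hr c v hv hvc hvs hne hvQ
  set f : ℝ → ℝ := fun t => ∫ s in t..r, φ s with hf
  obtain ⟨hfd, hfa, hfz, hfn⟩ := prim_props r φ f hφ hφ0 hr'.le hφr (fun _ => rfl)
  have hP := poincare1D p r hp hr (N-1) φ f hφ hφ0 (fun _ => rfl)
  have hlt' : ∫ t in (0:ℝ)..r, φ t ^ p * t ^ (N-1) < Q * ∫ t in (0:ℝ)..r, f t ^ p * t ^ (N-1) := hlt
  set N1 := ∫ t in (0:ℝ)..r, φ t ^ p * t ^ (N-1) with hN1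
  set D1 := ∫ t in (0:ℝ)..r, f t ^ p * t ^ (N-1) with hD1
  have hN10 : 0 ≤ N1 := intervalIntegral.integral_nonneg hr.le fun t ht =>
    mul_nonneg (Real.rpow_nonneg (hφ0 t) _) (pow_nonneg ht.1 _)
  have hD1p : 0 < D1 := by
    by_contra hcon
    push Not at hcon
    nlinarith [mul_nonneg hQ0 (neg_nonneg.2 hcon)]
  have hrp : 0 < r ^ p := Real.rpow_pos_of_pos hr _
  refine ⟨?_, ?_⟩
  · have : D1 ≤ (r ^ p * Q) * D1 := by nlinarith
    exact le_of_mul_le_mul_right (by linarith) hD1p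
  have hf0 : 0 < f 0 := by
    refine (hfn 0).lt_of_ne' fun h => hD1p.ne' ?_
    have hz : D1 = ∫ t in (0:ℝ)..r, (0:ℝ) := ?_
    · rw [hz]; simp
    refine intervalIntegral.integral_congr fun t ht => ?_
    rw [uIcc_of_le hr.le] at ht
    have : f t = 0 := le_antisymm (h ▸ hfa ht.1) (hfn t)
    simp only [this, Real.zero_rpow (by linarith : p ≠ 0), zero_mul]
  have hfc : Continuous f := continuous_iff_continuousAt.2 fun t => (hfd t).continuousAt
  obtain ⟨ρ₀, hρ₀, hfρ, hineq⟩ := oneD p Q r hp hr (N-1) φ f hφ hφ0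
    (fun t ht => hφr t (hr'.le.trans ht)) (fun _ => rfl) hfc hfn hf0 hQ0 hlt'.le
  have E₀ := H₀ φ f ρ₀ Q hφ hφ0 hfd hfa hfn hQ0 hineq
  have E₁ := H₁ φ f ρ₀ Q hφ hφ0 hfd hfa hfn hQ0 hineq
  obtain ⟨⟨L₀, l₀⟩, z₀, p₀⟩ := u_props φ f K hφ0 hφK hfd r' ρ₀ k hfz hρ₀ hfρ hkp e x₀
  obtain ⟨⟨L₁, l₁⟩, z₁, p₁⟩ := u_props φ f K hφ0 hφK hfd r' ρ₀ k hfz hρ₀ hfρ hkp e x₁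
  have hkQ : 0 ≤ k ^ p * Q := mul_nonneg (Real.rpow_nonneg hkp.le _) hQ0
  have R₀ := to_real_ineq (by linarith) hΩo hΩb l₀ (fun x => hfn _) hkQ hδ₀.le E₀
  have R₁ := to_real_ineq (by linarith) hΩo hΩb l₁ (fun x => hfn _) hkQ hδ₁.le E₁
  refine glue hp hΩo hΩb l₀ (fun x => hfn _) l₁ (fun x => hfn _) (p₀ Ω hx₀) (p₁ Ω hx₁) ?_ _
    (R₀.trans ?_) (R₁.trans ?_)
  · intro x
    have i0 := (le_abs_self _).trans (Aop_inner e (x - x₀) he)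
    have i1 := (neg_le_abs _).trans (Aop_inner e (x - x₁) he)
    have : (inner ℝ e (x - x₀) : ℝ) - inner ℝ e (x - x₁) = d := by
      rw [← inner_sub_right, sub_sub_sub_cancel_left, hxe, inner_smul_right,
        real_inner_self_eq_norm_sq, he]; ring
    have hsum : 2 * r ≤ k * ‖Aop e (x - x₀)‖ + k * ‖Aop e (x - x₁)‖ := by
      rw [← mul_add]
      calc 2 * r = k * d := by rw [hk]; field_simp
        _ ≤ _ := by gcongr; linarith
    by_cases h : r' < k * ‖Aop e (x - x₀)‖
    · exact Or.inl (z₀ x h)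
    · exact Or.inr (z₁ x (by linarith))
  · refine mul_le_mul_of_nonneg_right ?_ (integral_nonneg fun x => Real.rpow_nonneg (hfn _) _)
    gcongr; exact min_le_left _ _
  · refine mul_le_mul_of_nonneg_right ?_ (integral_nonneg fun x => Real.rpow_nonneg (hfn _) _)
    gcongr; exact min_le_right _ _

/-- Theorem 3.1, inequality (3.1). For every open bounded convex set
`Ω ⊂ ℝ^N` and every open ball `B ⊂ ℝ^N`,
`μ_p(Ω) < λ_p(B) · (diam B / diam Ω)^p`. -/
theorem muP_lt_lambdaP_ball_diam {N : ℕ} (hN : 2 ≤ N) (p : ℝ) (hp : 1 < p)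
    (Ω : Set (EuclideanSpace ℝ (Fin N))) (hΩo : IsOpen Ω)
    (hΩb : Bornology.IsBounded Ω) (hΩc : Convex ℝ Ω) (hΩne : Ω.Nonempty)
    (c : EuclideanSpace ℝ (Fin N)) (r : ℝ) (hr : 0 < r) :
    muPQ p p Ω < lambdaPQ p p (ball c r) * (diam (ball c r) / diam Ω) ^ p := by
  have : Nontrivial (EuclideanSpace ℝ (Fin N)) :=
    Module.nontrivial_of_finrank_pos (R := ℝ) (by simp; omega)
  have hcomp : IsCompact (closure Ω) := hΩb.isCompact_closure
  have hbc : Bornology.IsBounded (closure Ω) := hcomp.isBounded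
  obtain ⟨⟨x₀, x₁⟩, ⟨hx₀, hx₁⟩, hmax⟩ := (hcomp.prod hcomp).exists_isMaxOn
    (hΩne.closure.prod hΩne.closure) ((continuous_fst.dist continuous_snd).continuousOn)
  have hdist : dist x₀ x₁ = diam Ω := by
    rw [← diam_closure]
    refine le_antisymm (dist_le_diam_of_mem hbc hx₀ hx₁) ?_
    refine diam_le_of_forall_dist_le dist_nonneg fun x hx y hy => ?_
    have h3 := isMaxOn_iff.1 hmax (x, y) (Set.mk_mem_prod hx hy)
    simpa only using h3
  have hd : 0 < diam Ω := by
    obtain ⟨z, hz⟩ := hΩne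
    obtain ⟨ε, hε, hb⟩ := Metric.isOpen_iff.1 hΩo z hz
    have h1 := diam_mono hb hΩb
    rw [Metric.diam_ball_eq z hε.le] at h1
    linarith
  have hd0 : diam Ω ≠ 0 := hd.ne'
  have bd : ∀ y ∈ closure Ω, ∀ x ∈ Ω, ‖x - y‖ ≤ diam Ω := by
    intro y hy x hx
    rw [← dist_eq_norm, ← diam_closure]
    exact dist_le_diam_of_mem hbc (subset_closure hx) hy
  obtain ⟨δ, hδ, H⟩ := main_Q hN p hp Ω hΩo hΩb hΩc hΩne c r hr x₀ x₁ ((diam Ω)⁻¹ • (x₁ - x₀))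
    hx₀ hx₁ (diam Ω) hd (bd x₀ hx₀) (bd x₁ hx₁)
    (by rw [norm_smul, ← dist_eq_norm, dist_comm, hdist, Real.norm_of_nonneg (by positivity)]; field_simp)
    (by rw [smul_smul, mul_inv_cancel₀ hd0, one_smul])
  rw [Metric.diam_ball_eq c hr.le]
  set l := lambdaPQ p p (ball c r) with hl
  have hrp : 0 < r ^ p := Real.rpow_pos_of_pos hr _
  have hkp : 0 < (2 * r / diam Ω) ^ p := Real.rpow_pos_of_pos (by positivity) _
  have hlpos : 0 < l := by
    have : (r ^ p)⁻¹ ≤ l := le_of_forall_gt_imp_ge_of_dense fun Q hQ => by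
      rw [inv_le_iff_one_le_mul₀' hrp]
      exact (H Q hQ).1
    exact lt_of_lt_of_le (by positivity) this
  have hmu : muPQ p p Ω ≤ (2 * r / diam Ω) ^ p * l * (1 - δ) := by
    have ht : Filter.Tendsto (fun Q => (2 * r / diam Ω) ^ p * Q * (1 - δ)) (nhdsWithin l (Ioi l))
        (nhds ((2 * r / diam Ω) ^ p * l * (1 - δ))) := by
      have : Continuous (fun Q => (2 * r / diam Ω) ^ p * Q * (1 - δ)) := by fun_prop
      exact (this.tendsto l).mono_left nhdsWithin_le_nhds
    refine ge_of_tendsto ht ?_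
    filter_upwards [self_mem_nhdsWithin] with Q hQ
    exact (H Q hQ).2
  nlinarith [mul_pos (mul_pos hkp hlpos) hδ]
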